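/- arXiv:1001.1293 — 3 statements merged into one kernel-verified Lean document; each statement's English description precedes it below -/
import Mathlib

section
/- There exist constants c₄, c₅ > 0 (depending only on ξ and the sequence (x_k)) such that for every polynomial R ∈ ℤ[T] of degree 3 and every integer k ≥ 1 with X_k > c₄·‖R‖^(γ²), one has {x_{k,0}·R(ξ)} ≥ c₅·‖R‖^(−γ²). -/
open Polynomial Filter

noncomputable def gold : ℝ := (1 + Real.sqrt 5) / 2

def Mmat (k : ℕ) : Matrix (Fin 2) (Fin 2) ℤ := !![3, (-1)^k; (-1)^(k+1), 0]

noncomputable def Xnorm (x : ℕ → Matrix (Fin 2) (Fin 2) ℤ) (k : ℕ) : ℝ :=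
  max |(x k 0 0 : ℝ)| (max |(x k 0 1 : ℝ)| |(x k 1 1 : ℝ)|)

def MarkoffSeq (ξ : ℝ) (x : ℕ → Matrix (Fin 2) (Fin 2) ℤ) : Prop :=
  (∀ k, 1 ≤ k → x k 0 1 = x k 1 0) ∧
  (∀ k, 1 ≤ k → (x k).det = 1) ∧
  ∃ c₁ c₂ c₃ : ℝ, 0 < c₁ ∧ 0 < c₂ ∧ 0 < c₃ ∧ ∀ k, 1 ≤ k →
    (c₁ * Xnorm x k ^ gold ≤ Xnorm x (k+1) ∧ Xnorm x (k+1) ≤ c₂ * Xnorm x k ^ gold) ∧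
    (|(x k 0 0 : ℝ) * ξ - (x k 0 1 : ℝ)| ≤ c₃ / Xnorm x k ∧
     |(x k 0 1 : ℝ) * ξ - (x k 1 1 : ℝ)| ≤ c₃ / Xnorm x k) ∧
    (x (k+2) = x (k+1) * Mmat (k+1) * x k ∧ x (k+2) = x k * Mmat k * x (k+1)) ∧
    (Xnorm x k < Xnorm x (k+1) ∧ Xnorm x k < (1 + ξ^2) * |(x k 0 0 : ℝ)|)

def polyNorm (P : Polynomial ℤ) : ℕ := P.support.sup fun i => (P.coeff i).natAbs

noncomputable def distInt (η : ℝ) : ℝ := |η - round η|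

noncomputable def ratHeight (α : ℚ) : ℝ := max |(α.num : ℝ)| (α.den : ℝ)

def IsMinIntPoly (α : ℂ) (P : Polynomial ℤ) : Prop :=
  P ≠ 0 ∧ Polynomial.aeval α P = 0 ∧ P.content = 1 ∧ 0 < P.leadingCoeff ∧
  ∀ Q : Polynomial ℤ, Q ≠ 0 → Polynomial.aeval α Q = 0 → P.degree ≤ Q.degree

noncomputable def Qpoly (x : ℕ → Matrix (Fin 2) (Fin 2) ℤ) (k : ℕ) : Polynomial ℤ :=
  Polynomial.C (x k 0 1 * x (k+1) 1 1 - x k 1 1 * x (k+1) 0 1)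
  - Polynomial.C (x k 0 0 * x (k+1) 1 1 - x k 1 1 * x (k+1) 0 0) * Polynomial.X
  + Polynomial.C (x k 0 0 * x (k+1) 0 1 - x k 0 1 * x (k+1) 0 0) * Polynomial.X ^ 2



theorem abs_cast_of_mul_self {s : ℤ} (hs : s * s = 1) : |(s : ℝ)| = 1 := by
  rcases Int.isUnit_iff.1 (IsUnit.of_mul_eq_one s hs) with h | h <;> simp [h]

theorem mul_eq_four_of_rec {A : Type*} [CommRing A] {e u v w v₁ w₁ v₂ w₂ : A} (he : e * e = 1)
    (hd : u * w - v * v = 1) (hd₁ : -(v₁ * v₁) = 1)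
    (h₁ : v₂ = (3 * u - e * v) * v₁ + e * u * w₁) (h₂ : v₂ = e * v * v₁)
    (h₃ : w₂ = (3 * v - e * w) * v₁ + e * v * w₁) :
    2 * v₁ * u * (w₁ * (- (-e * v₁) * v₂) - 3 * v₂ - 2 * -e * w₂) = 4 := by
  grind

/-- The entries `u k, v k, v k, w k` of a sequence of symmetric matrices of determinant one which
satisfies the recurrence with sign `e k`, together with their sizes `X k` and approximation
properties relative to `ξ`. -/
structure MarkoffData (ξ : ℝ) (u v w e : ℕ → ℤ) (X : ℕ → ℝ) (c : ℝ) : Prop where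
  sign_mul_self : ∀ k, e k * e k = 1
  sign_succ : ∀ k, e (k + 1) = -e k
  det : ∀ k, u k * w k - v k * v k = 1
  rec_u : ∀ k, u (k + 2) = (3 * u k - e k * v k) * u (k + 1) + e k * u k * v (k + 1)
  rec_v : ∀ k, v (k + 2) = (3 * u k - e k * v k) * v (k + 1) + e k * u k * w (k + 1)
  rec_v' : ∀ k, v (k + 2) = (3 * v k - e k * w k) * u (k + 1) + e k * v k * v (k + 1)
  rec_w : ∀ k, w (k + 2) = (3 * v k - e k * w k) * v (k + 1) + e k * v k * w (k + 1)
  c_pos : 0 < c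
  one_le : ∀ k, 1 ≤ X k
  abs_u_le : ∀ k, |(u k : ℝ)| ≤ X k
  abs_v_le : ∀ k, |(v k : ℝ)| ≤ X k
  abs_w_le : ∀ k, |(w k : ℝ)| ≤ X k
  le_abs_u : ∀ k, X k ≤ c * |(u k : ℝ)|
  approx_u : ∀ k, |(u k : ℝ) * ξ - v k| ≤ c / X k
  approx_v : ∀ k, |(v k : ℝ) * ξ - w k| ≤ c / X k
  strictMono : StrictMono X
  tendsto : Tendsto X atTop atTop

namespace MarkoffData

variable {ξ : ℝ} {u v w e : ℕ → ℤ} {X : ℕ → ℝ} {c : ℝ}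

theorem X_pos (h : MarkoffData ξ u v w e X c) (k : ℕ) : 0 < X k :=
  zero_lt_one.trans_le (h.one_le k)

theorem u_ne_zero (h : MarkoffData ξ u v w e X c) (k : ℕ) : (u k : ℝ) ≠ 0 := by
  intro h0
  have h1 := h.le_abs_u k
  have h2 := h.X_pos k
  rw [h0, abs_zero, mul_zero] at h1
  linarith

theorem abs_sign (h : MarkoffData ξ u v w e X c) (k : ℕ) : |(e k : ℝ)| = 1 :=
  abs_cast_of_mul_self (h.sign_mul_self k)

theorem v_mul_w_sub (h : MarkoffData ξ u v w e X c) (k : ℕ) :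
    v (k + 1) * w (k + 2) - w (k + 1) * v (k + 2) = -3 * v k + e k * w k := by
  rw [h.rec_w k, h.rec_v' k]
  linear_combination (-3 * v k + e k * w k) * h.det (k + 1)

theorem u_mul_w_sub (h : MarkoffData ξ u v w e X c) (k : ℕ) :
    u k * w (k + 2) - w k * u (k + 2) = -3 * u (k + 1) - 2 * e k * v (k + 1) := by
  have h2 := h.rec_v k
  rw [h.rec_v' k] at h2
  rw [h.rec_w k, h.rec_u k]
  linear_combination (-v k) * h2 + (-3 * u (k + 1) - 2 * e k * v (k + 1)) * h.det k

/-- Modulo one, `w (k + 3) * ξ` is close to `- w k * ξ`. -/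
theorem w_add_three (h : MarkoffData ξ u v w e X c) (k : ℕ) :
    (w (k + 3) : ℝ) * ξ = -(w k * ξ) + ((3 * v (k + 1) * w (k + 2) + 3 * e k * w k : ℤ) : ℝ)
      + (3 * v (k + 1) * (v (k + 2) * ξ - w (k + 2)) + 3 * e k * (v k * ξ - w k)) := by
  have h1 : (w (k + 3) : ℝ) = (3 * v (k + 1) + e k * w (k + 1)) * v (k + 2)
      - e k * v (k + 1) * w (k + 2) := by
    have := h.rec_w (k + 1)
    rw [h.sign_succ] at this
    have h3 : w (k + 3) = _ := this
    rw [h3]; push_cast; ring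
  have h2 : (v (k + 1) * w (k + 2) - w (k + 1) * v (k + 2) : ℝ) = -3 * v k + e k * w k := by
    exact_mod_cast h.v_mul_w_sub k
  have h3 : (e k : ℝ) * e k = 1 := by exact_mod_cast h.sign_mul_self k
  rw [h1]; push_cast
  linear_combination (-ξ * e k) * h2 - ξ * w k * h3

theorem u_mul_w_add_two (h : MarkoffData ξ u v w e X c) (k : ℕ) :
    (u k * w (k + 2) : ℝ) * ξ = ((w k * v (k + 2) - 3 * v (k + 1) - 2 * e k * w (k + 1) : ℤ) : ℝ)
      + (w k * (u (k + 2) * ξ - v (k + 2)) - 3 * (u (k + 1) * ξ - v (k + 1))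
        - 2 * e k * (v (k + 1) * ξ - w (k + 1))) := by
  have h2 : (u k * w (k + 2) - w k * u (k + 2) : ℝ) = -3 * u (k + 1) - 2 * e k * v (k + 1) := by
    exact_mod_cast h.u_mul_w_sub k
  push_cast
  linear_combination ξ * h2

theorem u_succ_dvd_mul_sub_four (h : MarkoffData ξ u v w e X c) (k : ℕ) :
    u (k + 1) ∣ 2 * v (k + 1) * u k *
      (w (k + 1) * v (k + 3) - 3 * v (k + 2) - 2 * e (k + 1) * w (k + 2)) - 4 := by
  rw [← Int.natAbs_dvd, ← ZMod.intCast_zmod_eq_zero_iff_dvd]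
  set n := (u (k + 1)).natAbs
  have hu : (u (k + 1) : ZMod n) = 0 := by
    rw [ZMod.intCast_zmod_eq_zero_iff_dvd, Int.natAbs_dvd]
  have he : (e k * e k : ZMod n) = 1 := by
    exact_mod_cast congrArg (Int.cast : ℤ → ZMod n) (h.sign_mul_self k)
  have hs : (e (k + 1) : ZMod n) = -e k := by
    exact_mod_cast congrArg (Int.cast : ℤ → ZMod n) (h.sign_succ k)
  have hd := congrArg (Int.cast : ℤ → ZMod n) (h.det k)
  have hd' := congrArg (Int.cast : ℤ → ZMod n) (h.det (k + 1))
  have h1 := congrArg (Int.cast : ℤ → ZMod n) (h.rec_v k)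
  have h2 := congrArg (Int.cast : ℤ → ZMod n) (h.rec_v' k)
  have h3 := congrArg (Int.cast : ℤ → ZMod n) (h.rec_w k)
  have h4 : (v (k + 3) : ZMod n) = ((3 * u (k + 1) - e (k + 1) * v (k + 1)) * v (k + 2) +
    e (k + 1) * u (k + 1) * w (k + 2) : ℤ) := congrArg (Int.cast : ℤ → ZMod n) (h.rec_v (k + 1))
  push_cast at *
  rw [h4, hs]
  simp only [hu, mul_zero, zero_mul, add_zero, zero_add, zero_sub] at *
  exact sub_eq_zero.mpr (mul_eq_four_of_rec he hd hd' h1 h2 h3)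

theorem one_le_abs_u (h : MarkoffData ξ u v w e X c) (k : ℕ) : 1 ≤ |(u k : ℝ)| := by
  have : u k ≠ 0 := by exact_mod_cast h.u_ne_zero k
  exact_mod_cast Int.one_le_abs this

theorem tendsto_const_div_X (h : MarkoffData ξ u v w e X c) (d : ℝ) :
    Tendsto (fun k => d / X k) atTop (nhds 0) :=
  h.tendsto.const_div_atTop d

theorem tendsto_approx_u (h : MarkoffData ξ u v w e X c) :
    Tendsto (fun k => (u k : ℝ) * ξ - v k) atTop (nhds 0) :=
  squeeze_zero_norm h.approx_u (h.tendsto_const_div_X c)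

theorem abs_div_u_le (h : MarkoffData ξ u v w e X c) (k : ℕ) (y : ℝ) : |y / u k| ≤ |y| := by
  rw [abs_div]; exact div_le_self (abs_nonneg _) (h.one_le_abs_u k)

theorem tendsto_v_div_u (h : MarkoffData ξ u v w e X c) :
    Tendsto (fun k => (v k : ℝ) / u k) atTop (nhds ξ) := by
  have h1 : Tendsto (fun k => ((u k : ℝ) * ξ - v k) / u k) atTop (nhds 0) :=
    squeeze_zero_norm (fun k => (h.abs_div_u_le k _).trans (h.approx_u k))
      (h.tendsto_const_div_X c)
  have h2 := (tendsto_const_nhds (x := ξ)).sub h1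
  rw [sub_zero] at h2
  refine h2.congr fun k => ?_
  have := h.u_ne_zero k
  field_simp
  ring

theorem tendsto_w_div_u (h : MarkoffData ξ u v w e X c) :
    Tendsto (fun k => (w k : ℝ) / u k) atTop (nhds (ξ ^ 2)) := by
  have h1 : Tendsto (fun k => ((v k : ℝ) * ξ - w k) / u k) atTop (nhds 0) :=
    squeeze_zero_norm (fun k => (h.abs_div_u_le k _).trans (h.approx_v k))
      (h.tendsto_const_div_X c)
  have h2 := (h.tendsto_v_div_u.mul_const ξ).sub h1
  rw [sub_zero, ← sq] at h2
  refine h2.congr fun k => ?_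
  have := h.u_ne_zero k
  field_simp
  ring

theorem tendsto_sign_mul (h : MarkoffData ξ u v w e X c) {f : ℕ → ℝ}
    (hf : Tendsto f atTop (nhds 0)) : Tendsto (fun k => e k * f k) atTop (nhds 0) := by
  refine squeeze_zero_norm (fun k => ?_) (tendsto_zero_iff_abs_tendsto_zero f |>.1 hf)
  rw [Real.norm_eq_abs, abs_mul, h.abs_sign, one_mul]
  rfl

theorem tendsto_u_div (h : MarkoffData ξ u v w e X c) :
    Tendsto (fun k => (u (k + 2) : ℝ) / (u k * u (k + 1))) atTop (nhds 3) := by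
  have h1 := h.tendsto_v_div_u
  have h2 := (tendsto_add_atTop_iff_nat 1).2 h1
  have h3 := h.tendsto_sign_mul (by simpa using h2.sub h1)
  have h4 := h3.const_add 3
  rw [add_zero] at h4
  refine h4.congr fun k => ?_
  have := h.u_ne_zero k
  have := h.u_ne_zero (k + 1)
  rw [h.rec_u k]
  push_cast
  field_simp
  ring

theorem eventually_mul_le (h : MarkoffData ξ u v w e X c) :
    ∀ᶠ k in atTop, X k * X (k + 1) ≤ c ^ 2 * X (k + 2) := by
  filter_upwards [h.tendsto_u_div.eventually (lt_mem_nhds (by norm_num : (1 : ℝ) < 3))] with k hk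
  have h1 : |(u k * u (k + 1) : ℝ)| ≤ |(u (k + 2) : ℝ)| := by
    have h2 := hk.le.trans (le_abs_self _)
    rw [abs_div, le_div_iff₀] at h2
    · linarith
    · exact abs_pos.2 (mul_ne_zero (h.u_ne_zero _) (h.u_ne_zero _))
  calc X k * X (k + 1) ≤ (c * |(u k : ℝ)|) * (c * |(u (k + 1) : ℝ)|) :=
        mul_le_mul (h.le_abs_u _) (h.le_abs_u _) (h.X_pos _).le
          (mul_nonneg h.c_pos.le (abs_nonneg _))
    _ = c ^ 2 * |(u k * u (k + 1) : ℝ)| := by rw [abs_mul]; ring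
    _ ≤ c ^ 2 * X (k + 2) := by gcongr; exact h1.trans (h.abs_u_le _)

theorem det_real (h : MarkoffData ξ u v w e X c) (k : ℕ) :
    (u k * w k - v k * v k : ℝ) = 1 := by exact_mod_cast h.det k

theorem sign_real (h : MarkoffData ξ u v w e X c) (k : ℕ) :
    (e k * e k : ℝ) = 1 := by exact_mod_cast h.sign_mul_self k

theorem approx_v_eq (h : MarkoffData ξ u v w e X c) (k : ℕ) :
    u k * (v k * ξ - w k : ℝ) + 1 = u k * (u k * ξ - v k) * ξ - (u k * ξ - v k) ^ 2 := by
  linear_combination (-1) * h.det_real k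

theorem abs_u_mul_approx_le (h : MarkoffData ξ u v w e X c) (k : ℕ) :
    |(u k : ℝ) * (u k * ξ - v k)| ≤ c := by
  have := h.X_pos k
  calc |(u k : ℝ) * (u k * ξ - v k)| ≤ X k * (c / X k) := by
        rw [abs_mul]
        exact mul_le_mul (h.abs_u_le k) (h.approx_u k) (abs_nonneg _) this.le
    _ = c := by field_simp

theorem tendsto_sign_mul_u_mul_approx_u (h : MarkoffData ξ u v w e X c) :
    Tendsto (fun k => e k * (u k * (u k * ξ - v k)) : ℕ → ℝ) atTop (nhds (-1 / 3)) := by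
  rw [← tendsto_add_atTop_iff_nat 1]
  set a : ℕ → ℝ := fun k => u k * ξ - v k with ha
  have ha0 : Tendsto (fun k => a (k + 1)) atTop (nhds 0) :=
    (tendsto_add_atTop_iff_nat 1).2 h.tendsto_approx_u
  have t1 : Tendsto (fun k => u (k + 1) * a (k + 2) / u k) atTop (nhds 0) := by
    refine squeeze_zero_norm' ?_ (h.tendsto_const_div_X (c * c ^ 2))
    filter_upwards [h.eventually_mul_le] with k hk
    refine (h.abs_div_u_le k _).trans ?_
    have h0 := h.X_pos k
    have h1 := h.X_pos (k + 1)
    have h2 := h.X_pos (k + 2)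
    have := h.c_pos
    calc |u (k + 1) * a (k + 2)| ≤ X (k + 1) * (c / X (k + 2)) := by
          rw [abs_mul]
          exact mul_le_mul (h.abs_u_le _) (h.approx_u _) (abs_nonneg _) h1.le
      _ ≤ c * c ^ 2 / X k := by
          rw [← mul_div_assoc, div_le_div_iff₀ h2 h0]
          nlinarith
  have t2 : Tendsto (fun k => (ξ - v k / u k) * (u (k + 1) * a (k + 1))) atTop (nhds 0) := by
    have h3 : Tendsto (fun k => c * |ξ - v k / u k|) atTop (nhds 0) := by
      have := ((tendsto_const_nhds (x := ξ)).sub h.tendsto_v_div_u).abs.const_mul c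
      simpa using this
    refine squeeze_zero_norm (fun k => ?_) h3
    rw [Real.norm_eq_abs, abs_mul, mul_comm]
    gcongr
    exact h.abs_u_mul_approx_le _
  have t3 := (((h.tendsto_sign_mul t1).sub t2).add (ha0.pow 2)).const_add 1
  have t4 := t3.div_const (-3)
  have hlim : (1 + (0 - 0 + 0 ^ 2)) / -3 = (-1 / 3 : ℝ) := by norm_num
  rw [hlim] at t4
  refine t4.congr fun k => ?_
  have hu := h.u_ne_zero k
  have h5 : a (k + 2) = (3 * u k - e k * v k) * a (k + 1)
      + e k * u k * (v (k + 1) * ξ - w (k + 1)) := by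
    simp only [ha]
    rw [h.rec_u, h.rec_v]; push_cast; ring
  have h6 := h.approx_v_eq (k + 1)
  have h7 := h.sign_real k
  have h8 : u (k + 1) * a (k + 2) / u k = (3 - e k * (v k / u k)) * (u (k + 1) * a (k + 1))
      + e k * (u (k + 1) * (v (k + 1) * ξ - w (k + 1))) := by
    rw [h5]; field_simp
  rw [h8, h.sign_succ]
  push_cast
  simp only [ha] at *
  linear_combination (-1 / 3 : ℝ) * h6
    + (-1 / 3) * (u (k + 1) * (v (k + 1) * ξ - w (k + 1)) - v k / u k * (u (k + 1) * (u (k + 1) * ξ - v (k + 1))) ) * h7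

theorem tendsto_sign_mul_u_mul_approx_v (h : MarkoffData ξ u v w e X c) :
    Tendsto (fun k => e k * (u k * (v k * ξ - w k) + 1) : ℕ → ℝ) atTop (nhds (-ξ / 3)) := by
  have h1 := (h.tendsto_sign_mul_u_mul_approx_u.mul_const ξ).sub
    (h.tendsto_sign_mul (by simpa using h.tendsto_approx_u.pow 2))
  have h2 : -1 / 3 * ξ - 0 = -ξ / 3 := by ring
  rw [h2] at h1
  refine h1.congr fun k => ?_
  rw [h.approx_v_eq]
  ring

/-- The limit of `e m * u (m + 1)` times the distance from `u m * w (m + 5) * ξ` to an integer. -/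
theorem tendsto_remainder (h : MarkoffData ξ u v w e X c) :
    Tendsto (fun m => e m * (u (m + 1) *
      (-(w m * (u (m + 2) * ξ - v (m + 2)) - 3 * (u (m + 1) * ξ - v (m + 1))
        - 2 * e m * (v (m + 1) * ξ - w (m + 1)))
      + u m * (3 * v (m + 3) * (v (m + 4) * ξ - w (m + 4))
        + 3 * e m * (v (m + 2) * ξ - w (m + 2))))) : ℕ → ℝ) atTop (nhds (-2)) := by
  set α : ℕ → ℝ := fun k => e k * (u k * (u k * ξ - v k)) with hα
  set β : ℕ → ℝ := fun k => e k * (u k * (v k * ξ - w k) + 1) with hβ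
  set τ : ℕ → ℝ := fun k => u (k + 2) / (u k * u (k + 1)) with hτ
  set ρ : ℕ → ℝ := fun k => v k / u k with hρ
  set σ : ℕ → ℝ := fun k => w k / u k with hσ
  have tα : Tendsto α atTop (nhds (-1 / 3)) := h.tendsto_sign_mul_u_mul_approx_u
  have tβ : Tendsto β atTop (nhds (-ξ / 3)) := h.tendsto_sign_mul_u_mul_approx_v
  have tτ : Tendsto τ atTop (nhds 3) := h.tendsto_u_div
  have tρ : Tendsto ρ atTop (nhds ξ) := h.tendsto_v_div_u
  have tσ : Tendsto σ atTop (nhds (ξ ^ 2)) := h.tendsto_w_div_u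
  have sh {f : ℕ → ℝ} {y : ℝ} (n : ℕ) (hf : Tendsto f atTop (nhds y)) :
      Tendsto (fun k => f (k + n)) atTop (nhds y) := (tendsto_add_atTop_iff_nat n).2 hf
  have t3 : (3 : ℝ) ≠ 0 := by norm_num
  have t9 : (3 * 3 : ℝ) ≠ 0 := by norm_num
  have tf : Tendsto (fun m => -(α (m + 2) * σ m / τ m) - 3 * α (m + 1) - 2
      + 3 * (ρ (m + 3) * β (m + 4)) / (τ m * τ (m + 2)) - 3 / τ m) atTop (nhds (-2)) := by
    have := (((((((sh 2 tα).mul tσ).div tτ t3).neg.sub ((sh 1 tα).const_mul 3)).sub_const 2).add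
      ((((sh 3 tρ).mul (sh 4 tβ)).const_mul 3).div (tτ.mul (sh 2 tτ)) t9)).sub
      ((tendsto_const_nhds (x := (3 : ℝ))).div tτ t3))
    have hl : -(-1 / 3 * ξ ^ 2 / 3) - 3 * (-1 / 3) - 2 + 3 * (ξ * (-ξ / 3)) / (3 * 3) - 3 / 3
        = (-2 : ℝ) := by ring
    rwa [hl] at this
  have tg : Tendsto (fun m => -2 * β (m + 1) - 3 * ρ (m + 3) / (τ m * τ (m + 2))
      + 3 * β (m + 2) / τ m) atTop (nhds 0) := by
    have := (((sh 1 tβ).const_mul (-2)).sub (((sh 3 tρ).const_mul 3).div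
      (tτ.mul (sh 2 tτ)) t9)).add (((sh 2 tβ).const_mul 3).div tτ t3)
    have hl : -2 * (-ξ / 3) - 3 * ξ / (3 * 3) + 3 * (-ξ / 3) / 3 = 0 := by ring
    rwa [hl] at this
  have key := tf.add (h.tendsto_sign_mul tg)
  rw [add_zero] at key
  refine key.congr fun m => ?_
  have u0 := h.u_ne_zero m
  have u1 := h.u_ne_zero (m + 1)
  have u2 := h.u_ne_zero (m + 2)
  have u3 := h.u_ne_zero (m + 3)
  have u4 := h.u_ne_zero (m + 4)
  have he := h.sign_real m
  have e1 : (e (m + 1) : ℝ) = -e m := by rw [h.sign_succ]; push_cast; ring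
  have e2 : (e (m + 2) : ℝ) = e m := by rw [h.sign_succ, Int.cast_neg, e1]; ring
  have e4 : (e (m + 4) : ℝ) = e m := by
    rw [h.sign_succ, Int.cast_neg, h.sign_succ, Int.cast_neg, e2]; ring
  have q1 : σ m / τ m * u (m + 2) = w m * u (m + 1) := by
    simp only [hτ, hσ]; field_simp
  have q2 : ρ (m + 3) / (τ m * τ (m + 2)) * u (m + 4) = v (m + 3) * u m * u (m + 1) := by
    simp only [hτ, hρ, add_assoc, Nat.reduceAdd]; field_simp
  have q3 : 1 / τ m * u (m + 2) = u m * u (m + 1) := by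
    simp only [hτ]; field_simp
  simp only [hα, hβ, e1, e2, e4]
  generalize τ (m + 2) = τ₂ at *
  generalize τ m = τ₀ at *
  linear_combination (-e m * (u (m + 2) * ξ - v (m + 2)) : ℝ) * q1
    + (3 * e m * (v (m + 4) * ξ - w (m + 4)) : ℝ) * q2
    + (3 * (v (m + 2) * ξ - w (m + 2)) : ℝ) * q3
    + (2 + 3 / τ₀ + 3 * (v (m + 2) * ξ - w (m + 2)) * (1 / τ₀ * u (m + 2) - u m * u (m + 1))) * he

theorem eventually_mul_sq_le (h : MarkoffData ξ u v w e X c) (K : ℝ) :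
    ∀ᶠ m in atTop, K * (X m * X (m + 1) ^ 2) ≤ X (m + 5) := by
  have h0 := h.eventually_mul_le
  obtain ⟨n, hn⟩ := eventually_atTop.1 h0
  filter_upwards [eventually_ge_atTop n,
    ((tendsto_add_atTop_iff_nat 3).2 h.tendsto).eventually_ge_atTop (|K| * c ^ 6)] with m hm hK
  have i0 := hn m hm
  have i2 : X (m + 2) * X (m + 3) ≤ c ^ 2 * X (m + 4) := hn (m + 2) (by omega)
  have i3 : X (m + 3) * X (m + 4) ≤ c ^ 2 * X (m + 5) := hn (m + 3) (by omega)
  have p0 := h.X_pos m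
  have p1 := h.X_pos (m + 1)
  have p2 := h.X_pos (m + 2)
  have p3 := h.X_pos (m + 3)
  have p4 := h.X_pos (m + 4)
  have p5 := h.X_pos (m + 5)
  have hc := h.c_pos
  have l13 : X (m + 1) ≤ X (m + 3) := h.strictMono.monotone (by omega)
  have s1 : X m * X (m + 1) ^ 2 ≤ c ^ 4 * X (m + 4) := by
    calc X m * X (m + 1) ^ 2 = (X m * X (m + 1)) * X (m + 1) := by ring
      _ ≤ (c ^ 2 * X (m + 2)) * X (m + 3) := by gcongr
      _ = c ^ 2 * (X (m + 2) * X (m + 3)) := by ring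
      _ ≤ c ^ 2 * (c ^ 2 * X (m + 4)) := by gcongr
      _ = _ := by ring
  have s2 : c ^ 2 * (K * (X m * X (m + 1) ^ 2)) ≤ c ^ 2 * X (m + 5) := by
    calc c ^ 2 * (K * (X m * X (m + 1) ^ 2)) ≤ c ^ 2 * (|K| * (c ^ 4 * X (m + 4))) := by
          gcongr; exact le_abs_self K
      _ = (|K| * c ^ 6) * X (m + 4) := by ring
      _ ≤ X (m + 3) * X (m + 4) := by gcongr
      _ ≤ _ := i3
  exact le_of_mul_le_mul_left s2 (by positivity)

theorem exists_near_w (h : MarkoffData ξ u v w e X c) :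
    ∃ C : ℝ, 0 < C ∧ ∃ n, ∀ j l, n ≤ l → ∃ s A : ℤ, s * s = 1 ∧
      |(w (l + 3 * j) : ℝ) * ξ - s * (w l * ξ) - A| ≤ C / X l := by
  have hc := h.c_pos
  obtain ⟨n, hn⟩ := eventually_atTop.1 (h.eventually_mul_le.and
    (((tendsto_add_atTop_iff_nat 1).2 h.tendsto).eventually_ge_atTop (2 * c ^ 2)))
  refine ⟨2 * (3 * c ^ 3 + 3 * c), by positivity, n, fun j => ?_⟩
  induction j with
  | zero => exact fun l _ => ⟨1, 0, by norm_num, by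
      simpa using div_nonneg (by positivity) (h.X_pos l).le⟩
  | succ j ih =>
    intro l hl
    obtain ⟨s, A, hs, hA⟩ := ih (l + 3) (by omega)
    obtain ⟨i0, i1⟩ := hn l hl
    have p0 := h.X_pos l
    have p1 := h.X_pos (l + 1)
    have p2 := h.X_pos (l + 2)
    have p3 := h.X_pos (l + 3)
    have l2 : 2 * X l ≤ X (l + 2) := by
      have : 2 * c ^ 2 * X l ≤ c ^ 2 * X (l + 2) := by nlinarith
      exact le_of_mul_le_mul_left (by linarith) (by positivity : 0 < c ^ 2)
    have l3 : 2 * X l ≤ X (l + 3) := l2.trans (h.strictMono.monotone (by omega))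
    refine ⟨-s, s * (3 * v (l + 1) * w (l + 2) + 3 * e l * w l) + A, by linarith, ?_⟩
    have hw := h.w_add_three l
    set η : ℝ := 3 * v (l + 1) * (v (l + 2) * ξ - w (l + 2)) + 3 * e l * (v l * ξ - w l) with hη
    have hη_le : |η| ≤ (3 * c ^ 3 + 3 * c) / X l := by
      have b1 : |(3 * v (l + 1) * (v (l + 2) * ξ - w (l + 2)) : ℝ)| ≤ 3 * c ^ 3 / X l := by
        calc |(3 * v (l + 1) * (v (l + 2) * ξ - w (l + 2)) : ℝ)|
            ≤ 3 * X (l + 1) * (c / X (l + 2)) := by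
              rw [abs_mul, abs_mul, abs_of_pos (by norm_num : (0 : ℝ) < 3)]
              gcongr
              · exact h.abs_v_le _
              · exact h.approx_v _
          _ ≤ 3 * c ^ 3 / X l := by
              rw [← mul_div_assoc, div_le_div_iff₀ p2 p0]
              nlinarith
      have b2 : |(3 * e l * (v l * ξ - w l) : ℝ)| ≤ 3 * c / X l := by
        rw [abs_mul, abs_mul, h.abs_sign, abs_of_pos (by norm_num : (0 : ℝ) < 3), mul_one,
          mul_div_assoc]
        gcongr
        exact h.approx_v _
      calc |η| ≤ _ := abs_add_le _ _
        _ ≤ 3 * c ^ 3 / X l + 3 * c / X l := add_le_add b1 b2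
        _ = _ := by ring
    have hs1 := abs_cast_of_mul_self hs
    have hidx : l + 3 * (j + 1) = l + 3 + 3 * j := by ring
    have heq : (w (l + 3 * (j + 1)) : ℝ) * ξ - ((-s : ℤ) : ℝ) * (w l * ξ)
        - ((s * (3 * v (l + 1) * w (l + 2) + 3 * e l * w l) + A : ℤ) : ℝ)
        = (w (l + 3 + 3 * j) * ξ - s * (w (l + 3) * ξ) - A) + s * η := by
      rw [hidx, hw]; push_cast; ring
    rw [heq]
    calc _ ≤ _ := abs_add_le _ _
      _ ≤ 2 * (3 * c ^ 3 + 3 * c) / X (l + 3) + (3 * c ^ 3 + 3 * c) / X l := by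
          rw [abs_mul, hs1, one_mul]; exact add_le_add hA hη_le
      _ ≤ 2 * (3 * c ^ 3 + 3 * c) / (2 * X l) + (3 * c ^ 3 + 3 * c) / X l := by gcongr
      _ = _ := by field_simp; ring

theorem exists_dvd (h : MarkoffData ξ u v w e X c) {m : ℕ} (hm : 1 ≤ m) :
    ∃ d, u m ∣ d * (w m * v (m + 2) - 3 * v (m + 1) - 2 * e m * w (m + 1)) - 4 := by
  obtain ⟨k, rfl⟩ : ∃ k, m = k + 1 := ⟨m - 1, by omega⟩
  exact ⟨_, h.u_succ_dvd_mul_sub_four k⟩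

theorem eventually_near_add_two (h : MarkoffData ξ u v w e X c) :
    ∀ᶠ m in atTop, ∃ N d : ℤ, u m ∣ d * N - 4 ∧
      |(u m : ℝ) * (w (m + 2) * ξ) - N| ≤ (c ^ 3 + 5 * c) / X (m + 1) := by
  filter_upwards [h.eventually_mul_le, eventually_ge_atTop 1] with m i0 hm
  have hc := h.c_pos
  have p0 := h.X_pos m
  have p1 := h.X_pos (m + 1)
  have p2 := h.X_pos (m + 2)
  obtain ⟨d, hd⟩ := h.exists_dvd hm
  refine ⟨_, d, hd, ?_⟩
  rw [← mul_assoc, h.u_mul_w_add_two, add_sub_cancel_left]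
  have b1 : |(w m * (u (m + 2) * ξ - v (m + 2)) : ℝ)| ≤ c ^ 3 / X (m + 1) := by
    calc |(w m * (u (m + 2) * ξ - v (m + 2)) : ℝ)| ≤ X m * (c / X (m + 2)) := by
          rw [abs_mul]
          gcongr
          · exact h.abs_w_le _
          · exact h.approx_u _
      _ ≤ c ^ 3 / X (m + 1) := by
          rw [← mul_div_assoc, div_le_div_iff₀ p2 p1]
          nlinarith
  have b2 : |(3 * (u (m + 1) * ξ - v (m + 1)) : ℝ)| ≤ 3 * (c / X (m + 1)) := by
    rw [abs_mul, abs_of_pos (by norm_num : (0 : ℝ) < 3)]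
    gcongr
    exact h.approx_u _
  have b3 : |(2 * e m * (v (m + 1) * ξ - w (m + 1)) : ℝ)| ≤ 2 * (c / X (m + 1)) := by
    rw [abs_mul, abs_mul, h.abs_sign, abs_two, mul_one]
    gcongr
    exact h.approx_v _
  calc _ ≤ _ := abs_sub _ _
    _ ≤ (c ^ 3 / X (m + 1) + 3 * (c / X (m + 1))) + 2 * (c / X (m + 1)) :=
        add_le_add ((abs_sub _ _).trans (add_le_add b1 b2)) b3
    _ = (c ^ 3 + 5 * c) / X (m + 1) := by ring

theorem eventually_near_add_five (h : MarkoffData ξ u v w e X c) :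
    ∀ᶠ m in atTop, ∃ N d : ℤ, u m ∣ d * N - 4 ∧
      3 / 2 / X (m + 1) ≤ |(u m : ℝ) * (w (m + 5) * ξ) - N| ∧
      |(u m : ℝ) * (w (m + 5) * ξ) - N| ≤ 5 / 2 * c / X (m + 1) := by
  have hrem := h.tendsto_remainder.abs
  rw [abs_neg, abs_two] at hrem
  filter_upwards [eventually_ge_atTop 1,
    hrem.eventually (lt_mem_nhds (by norm_num : (3 / 2 : ℝ) < 2)),
    hrem.eventually (gt_mem_nhds (by norm_num : (2 : ℝ) < 5 / 2))] with m hm r1 r2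
  have p1 := h.X_pos (m + 1)
  have hc := h.c_pos
  obtain ⟨d, hd⟩ := h.exists_dvd hm
  have h2 := h.u_mul_w_add_two m
  have hw : (w (m + 5) : ℝ) * ξ = _ := h.w_add_three (m + 2)
  have e2 : e (m + 2) = e m := by rw [h.sign_succ, h.sign_succ, neg_neg]
  rw [e2] at hw
  simp only [add_assoc, Nat.reduceAdd] at hw
  obtain ⟨M, hM⟩ : ∃ M, M = -(w m * v (m + 2) - 3 * v (m + 1) - 2 * e m * w (m + 1))
    + u m * (3 * v (m + 3) * w (m + 4) + 3 * e m * w (m + 2)) := ⟨_, rfl⟩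
  obtain ⟨y, hy⟩ : ∃ y : ℝ, y = (u m : ℝ) * (w (m + 5) * ξ) - M := ⟨_, rfl⟩
  have hy' : y = -(w m * (u (m + 2) * ξ - v (m + 2)) - 3 * (u (m + 1) * ξ - v (m + 1))
        - 2 * e m * (v (m + 1) * ξ - w (m + 1)))
      + u m * (3 * v (m + 3) * (v (m + 4) * ξ - w (m + 4))
        + 3 * e m * (v (m + 2) * ξ - w (m + 2))) := by
    rw [hy, hw, hM]
    push_cast at h2 ⊢
    linear_combination -h2
  rw [← hy', abs_mul, abs_mul, h.abs_sign, one_mul] at r1 r2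
  refine ⟨M, -d, ?_, ?_, ?_⟩
  · refine (dvd_add hd (dvd_mul_right (u m)
      (-d * (3 * v (m + 3) * w (m + 4) + 3 * e m * w (m + 2))))).trans (dvd_of_eq ?_)
    rw [hM]
    ring
  · rw [← hy, div_le_iff₀ p1]
    nlinarith [h.abs_u_le (m + 1), abs_nonneg y]
  · rw [← hy, le_div_iff₀ p1]
    nlinarith [h.le_abs_u (m + 1), abs_nonneg y]

theorem exists_near_u_mul_w (h : MarkoffData ξ u v w e X c) :
    ∃ C : ℝ, 0 < C ∧ ∀ᶠ m in atTop, ∀ j, ∃ N d : ℤ, u m ∣ d * N - 4 ∧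
      |(u m : ℝ) * (w (m + 2 + 3 * j) * ξ) - N| ≤ C / X (m + 1) ∧
      (1 ≤ j → 1 / X (m + 1) ≤ |(u m : ℝ) * (w (m + 2 + 3 * j) * ξ) - N|) := by
  have hc := h.c_pos
  obtain ⟨C, hC, n, hn⟩ := h.exists_near_w
  refine ⟨(c ^ 3 + 5 * c) + (5 / 2 * c + 1 / 2), by positivity, ?_⟩
  filter_upwards [h.eventually_near_add_two, h.eventually_near_add_five,
    h.eventually_mul_sq_le (2 * C), eventually_ge_atTop n] with m n2 n5 i5 hm j
  have p0 := h.X_pos m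
  have p1 := h.X_pos (m + 1)
  have p5 := h.X_pos (m + 5)
  rcases j with _ | j
  · obtain ⟨N, d, hd, hN⟩ := n2
    refine ⟨N, d, hd, hN.trans (div_le_div_of_nonneg_right ?_ p1.le), by simp⟩
    linarith
  · obtain ⟨N, d, hd, hN1, hN2⟩ := n5
    obtain ⟨s, A, hs, hA⟩ := hn j (m + 5) (by omega)
    set η : ℝ := (w (m + 5 + 3 * j) : ℝ) * ξ - s * (w (m + 5) * ξ) - A with hη
    have hη_le : |u m * η| ≤ 1 / 2 / X (m + 1) := by
      calc |u m * η| ≤ X m * (C / X (m + 5)) := by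
            rw [abs_mul]
            gcongr
            exact h.abs_u_le _
        _ ≤ 1 / 2 / X (m + 1) := by
            rw [← mul_div_assoc, div_le_div_iff₀ p5 p1]
            have : 2 * C * (X m * X (m + 1)) ≤ 2 * C * (X m * X (m + 1) ^ 2) := by
              gcongr; exact le_self_pow₀ (h.one_le _) two_ne_zero
            linarith
    have hidx : m + 2 + 3 * (j + 1) = m + 5 + 3 * j := by ring
    have heq : (u m : ℝ) * (w (m + 2 + 3 * (j + 1)) * ξ) - ((s * N + u m * A : ℤ) : ℝ)
        = s * ((u m : ℝ) * (w (m + 5) * ξ) - N) + u m * η := by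
      rw [hidx, hη]
      push_cast
      ring
    have hsr : |s * ((u m : ℝ) * (w (m + 5) * ξ) - N)| = |(u m : ℝ) * (w (m + 5) * ξ) - N| := by
      rw [abs_mul, abs_cast_of_mul_self hs, one_mul]
    refine ⟨s * N + u m * A, s * d, ?_, ?_, fun _ => ?_⟩
    · have : s * d * (s * N + u m * A) - 4 = (d * N - 4) + u m * (s * d * A) := by
        linear_combination (d * N) * hs
      rw [this]
      exact dvd_add hd (dvd_mul_right _ _)
    · rw [heq]
      calc _ ≤ _ := abs_add_le _ _
        _ ≤ 5 / 2 * c / X (m + 1) + 1 / 2 / X (m + 1) := by rw [hsr]; exact add_le_add hN2 hη_le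
        _ = (5 / 2 * c + 1 / 2) / X (m + 1) := by ring
        _ ≤ _ := div_le_div_of_nonneg_right
          (by linarith [(by positivity : 0 < c ^ 3 + 5 * c)]) p1.le
    · rw [heq]
      have h3 := abs_sub_abs_le_abs_sub (s * ((u m : ℝ) * (w (m + 5) * ξ) - N)) (-(u m * η))
      rw [abs_neg, sub_neg_eq_add, hsr] at h3
      have : 1 / X (m + 1) = 3 / 2 / X (m + 1) - 1 / 2 / X (m + 1) := by ring
      linarith

theorem abs_cubic_error_le (h : MarkoffData ξ u v w e X c) {H p q r : ℝ} (hp : |p| ≤ H)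
    (hq : |q| ≤ H) (hr : |r| ≤ H) (m k : ℕ) :
    |u m * (p * ((u k * ξ - v k) * ξ ^ 2 + (v k * ξ - w k) * ξ)
      + q * ((u k * ξ - v k) * ξ + (v k * ξ - w k)) + r * (u k * ξ - v k))|
      ≤ H * (c * (ξ ^ 2 + 2 * |ξ| + 2)) * (X m / X k) := by
  have ha := h.approx_u k
  have hb := h.approx_v k
  have hk := h.X_pos k
  have hc := h.c_pos
  generalize (u k * ξ - v k : ℝ) = a at *
  generalize (v k * ξ - w k : ℝ) = b at *
  have hd : 0 ≤ c / X k := by positivity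
  have hH : 0 ≤ H := (abs_nonneg p).trans hp
  have t1 : |p * (a * ξ ^ 2 + b * ξ)| ≤ H * (c / X k * ξ ^ 2 + c / X k * |ξ|) := by
    rw [abs_mul]
    gcongr
    refine (abs_add_le _ _).trans ?_
    rw [abs_mul, abs_mul, abs_of_nonneg (sq_nonneg ξ)]
    gcongr
  have t2 : |q * (a * ξ + b)| ≤ H * (c / X k * |ξ| + c / X k) := by
    rw [abs_mul]
    gcongr
    refine (abs_add_le _ _).trans ?_
    rw [abs_mul]
    gcongr
  have t3 : |r * a| ≤ H * (c / X k) := by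
    rw [abs_mul]
    gcongr
  rw [abs_mul]
  calc _ ≤ X m * (H * (c / X k * ξ ^ 2 + c / X k * |ξ|) + H * (c / X k * |ξ| + c / X k)
        + H * (c / X k)) := by
        gcongr
        · exact (h.X_pos m).le
        · exact h.abs_u_le m
        · exact (abs_add_le _ _).trans
            (add_le_add ((abs_add_le _ _).trans (add_le_add t1 t2)) t3)
    _ = _ := by ring

/-- The dichotomy obtained by multiplying `u k * R(ξ) - n` by `u m`. -/
theorem exists_dichotomy (h : MarkoffData ξ u v w e X c) :
    ∃ C : ℝ, 1 ≤ C ∧ ∃ m₀, ∀ m, m₀ ≤ m → ∀ (j : ℕ) (p q r s n : ℤ) (H : ℝ), p ≠ 0 →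
      |(p : ℝ)| ≤ H → |(q : ℝ)| ≤ H → |(r : ℝ)| ≤ H → C * H ≤ X (m + 1) →
      1 / 2 / X m ≤ |u (m + 2 + 3 * j) * (p * ξ ^ 3 + q * ξ ^ 2 + r * ξ + s) - n| ∨
      (X m ≤ 4 * c * H ∧ (1 ≤ j →
        1 / 8 / X (m + 1) ≤ |u (m + 2 + 3 * j) * (p * ξ ^ 3 + q * ξ ^ 2 + r * ξ + s) - n|)) := by
  have hc := h.c_pos
  obtain ⟨C, hC, hev⟩ := h.exists_near_u_mul_w
  set D : ℝ := c * (ξ ^ 2 + 2 * |ξ| + 2) with hD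
  have hD0 : 0 < D := by positivity
  obtain ⟨m₀, hm₀⟩ := eventually_atTop.1
    ((hev.and h.eventually_mul_le).and (h.eventually_mul_sq_le (2 * D)))
  refine ⟨1 + 2 * (C + D * c ^ 2), by linarith [(by positivity : 0 < C + D * c ^ 2)], m₀, ?_⟩
  intro m hm j p q r s n H hp0 hp hq hr hH
  obtain ⟨⟨hN, i2⟩, i5⟩ := hm₀ m hm
  obtain ⟨N, d, hd, hN1, hN2⟩ := hN j
  have p0 := h.X_pos m
  have p1 := h.X_pos (m + 1)
  have p2 := h.X_pos (m + 2)
  have hp1 : (1 : ℝ) ≤ |(p : ℝ)| := by exact_mod_cast Int.one_le_abs hp0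
  have hH0 : 0 < H := by linarith
  have hu : 0 < |(u m : ℝ)| := zero_lt_one.trans_le (h.one_le_abs_u m)
  have herr := h.abs_cubic_error_le hp hq hr m (m + 2 + 3 * j)
  rw [← hD] at herr
  obtain ⟨Z, hZ⟩ : ∃ Z : ℤ, Z = p * N + u m * (q * w (m + 2 + 3 * j) + r * v (m + 2 + 3 * j)
    + s * u (m + 2 + 3 * j) - n) := ⟨_, rfl⟩
  obtain ⟨Δ, hΔ⟩ : ∃ Δ : ℝ, Δ = u (m + 2 + 3 * j) * (p * ξ ^ 3 + q * ξ ^ 2 + r * ξ + s) - n :=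
    ⟨_, rfl⟩
  have hsplit : u m * Δ = Z + p * ((u m : ℝ) * (w (m + 2 + 3 * j) * ξ) - N) +
      u m * (p * ((u (m + 2 + 3 * j) * ξ - v (m + 2 + 3 * j)) * ξ ^ 2
        + (v (m + 2 + 3 * j) * ξ - w (m + 2 + 3 * j)) * ξ)
      + q * ((u (m + 2 + 3 * j) * ξ - v (m + 2 + 3 * j)) * ξ
        + (v (m + 2 + 3 * j) * ξ - w (m + 2 + 3 * j)))
      + r * (u (m + 2 + 3 * j) * ξ - v (m + 2 + 3 * j))) := by
    rw [hΔ, hZ]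
    push_cast
    ring
  rw [← hΔ]
  have hk2 : X (m + 2) ≤ X (m + 2 + 3 * j) := h.strictMono.monotone (by omega)
  have hk5 : 1 ≤ j → X (m + 5) ≤ X (m + 2 + 3 * j) :=
    fun hj => h.strictMono.monotone (by omega)
  have pk := h.X_pos (m + 2 + 3 * j)
  generalize X (m + 2 + 3 * j) = Y at *
  generalize (u m : ℝ) * (p * ((u (m + 2 + 3 * j) * ξ - v (m + 2 + 3 * j)) * ξ ^ 2
        + (v (m + 2 + 3 * j) * ξ - w (m + 2 + 3 * j)) * ξ)
      + q * ((u (m + 2 + 3 * j) * ξ - v (m + 2 + 3 * j)) * ξ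
        + (v (m + 2 + 3 * j) * ξ - w (m + 2 + 3 * j)))
      + r * (u (m + 2 + 3 * j) * ξ - v (m + 2 + 3 * j))) = E at *
  generalize (u m : ℝ) * (w (m + 2 + 3 * j) * ξ) - N = F at *
  by_cases hlarge : 1 / 2 ≤ |u m * Δ|
  · left
    rw [div_le_iff₀ p0]
    rw [abs_mul] at hlarge
    nlinarith [h.abs_u_le m, abs_nonneg Δ]
  right
  have hE : |E| ≤ H * (D * c ^ 2) / X (m + 1) := by
    refine herr.trans ?_
    have : X m / Y ≤ c ^ 2 / X (m + 1) := by
      rw [div_le_div_iff₀ pk p1]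
      exact i2.trans (by gcongr)
    calc H * D * (X m / Y) ≤ H * D * (c ^ 2 / X (m + 1)) := by gcongr
      _ = _ := by ring
  have hF : |p * F| ≤ H * C / X (m + 1) := by
    rw [abs_mul, mul_div_assoc]
    gcongr
  have hEF : H * C / X (m + 1) + H * (D * c ^ 2) / X (m + 1) ≤ 1 / 2 := by
    rw [← add_div, div_le_iff₀ p1]
    nlinarith
  have hZ0 : Z = 0 := by
    have : |(Z : ℝ)| < 1 := by
      have h1 : (Z : ℝ) = u m * Δ - p * F - E := by rw [hsplit]; ring
      rw [h1]
      have h2 := abs_sub (u m * Δ - p * F) E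
      have h3 := abs_sub (u m * Δ) (p * F)
      push Not at hlarge
      linarith
    exact Int.abs_lt_one_iff.1 (by exact_mod_cast this)
  have hdiv : u m ∣ 4 * p := by
    have h1 : u m ∣ p * N := by
      rw [hZ0] at hZ
      exact ⟨-(q * w (m + 2 + 3 * j) + r * v (m + 2 + 3 * j) + s * u (m + 2 + 3 * j) - n),
        by linarith⟩
    have h2 : 4 * p = d * (p * N) - p * (d * N - 4) := by ring
    rw [h2]
    exact dvd_sub (h1.mul_left d) (hd.mul_left p)
  have hup : |(u m : ℝ)| ≤ 4 * |(p : ℝ)| := by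
    have h1 : |u m| ≤ |4 * p| :=
      Int.le_of_dvd (abs_pos.2 (by simpa using hp0)) ((abs_dvd_abs _ _).2 hdiv)
    rw [abs_mul, abs_of_pos (by norm_num : (0 : ℤ) < 4)] at h1
    exact_mod_cast h1
  refine ⟨?_, fun hj => ?_⟩
  · calc X m ≤ c * |(u m : ℝ)| := h.le_abs_u m
      _ ≤ c * (4 * H) := by gcongr; linarith
      _ = _ := by ring
  · have hH1 : H ≤ X (m + 1) := by
      refine le_trans ?_ hH
      nlinarith [(by positivity : 0 < C + D * c ^ 2)]
    have hE' : |E| ≤ 1 / 2 / X (m + 1) := by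
      refine herr.trans ?_
      rw [← mul_div_assoc, div_le_div_iff₀ pk p1]
      have h6 := i5.trans (hk5 hj)
      calc H * D * X m * X (m + 1) ≤ X (m + 1) * D * X m * X (m + 1) := by gcongr
        _ = 1 / 2 * (2 * D * (X m * X (m + 1) ^ 2)) := by ring
        _ ≤ 1 / 2 * Y := by gcongr
    have hF' : |(p : ℝ)| * (1 / X (m + 1)) ≤ |p * F| := by
      rw [abs_mul]
      gcongr
      exact hN2 hj
    have hΔ1 : |p * F| - |E| ≤ |(u m : ℝ)| * |Δ| := by
      rw [← abs_mul, hsplit, hZ0, Int.cast_zero, zero_add]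
      have := abs_sub_abs_le_abs_sub (p * F) (-E)
      rwa [abs_neg, sub_neg_eq_add] at this
    have h7 : |(u m : ℝ)| * (1 / 8 / X (m + 1)) ≤ |(u m : ℝ)| * |Δ| := by
      calc |(u m : ℝ)| * (1 / 8 / X (m + 1)) ≤ (4 * |(p : ℝ)|) * (1 / 8 / X (m + 1)) := by gcongr
        _ = |(p : ℝ)| * (1 / X (m + 1)) - |(p : ℝ)| * (1 / 2 / X (m + 1)) := by ring
        _ ≤ |(p : ℝ)| * (1 / X (m + 1)) - 1 * (1 / 2 / X (m + 1)) := by gcongr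
        _ ≤ _ := by linarith
    exact le_of_mul_le_mul_left h7 hu

theorem exists_lower_bound (h : MarkoffData ξ u v w e X c) {g b : ℝ} (hg : 1 ≤ g) (hb : 0 < b)
    (hX : ∀ k, X (k + 1) ≤ b * X k ^ g) :
    ∃ c₄ c₅ : ℝ, 0 < c₄ ∧ 0 < c₅ ∧ ∀ (p q r s n : ℤ) (H : ℝ), p ≠ 0 →
      |(p : ℝ)| ≤ H → |(q : ℝ)| ≤ H → |(r : ℝ)| ≤ H → ∀ k, c₄ * H ^ (g ^ 2) < X k →
      c₅ * H ^ (-(g ^ 2)) ≤ |u k * (p * ξ ^ 3 + q * ξ ^ 2 + r * ξ + s) - n| := by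
  have hc := h.c_pos
  have hg0 : 0 ≤ g := by linarith
  obtain ⟨C, hC, m₀, hdich⟩ := h.exists_dichotomy
  have hX2 : ∀ k, X (k + 2) ≤ b * b ^ g * X k ^ (g ^ 2) := by
    intro k
    have p0 := h.X_pos k
    calc X (k + 2) ≤ b * X (k + 1) ^ g := hX (k + 1)
      _ ≤ b * (b * X k ^ g) ^ g := by
          gcongr
          · exact (h.X_pos _).le
          · exact hX k
      _ = b * b ^ g * X k ^ (g ^ 2) := by
          rw [Real.mul_rpow hb.le (by positivity), ← Real.rpow_mul p0.le, sq]; ring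
  set K₁ : ℝ := X (m₀ + 2) + b * b ^ g * C ^ (g ^ 2) with hK₁
  set K₂ : ℝ := b * b ^ g * (4 * c) ^ (g ^ 2) with hK₂
  set K₃ : ℝ := b * (4 * c) ^ g with hK₃
  have pm := h.X_pos (m₀ + 2)
  have hK₁0 : 0 < K₁ := by positivity
  have hK₂0 : 0 < K₂ := by positivity
  have hK₃0 : 0 < K₃ := by positivity
  refine ⟨K₁ + K₂, min (1 / 2 / K₁) (1 / 8 / K₃), by positivity, by positivity, ?_⟩
  intro p q r s n H hp0 hp hq hr k hk
  have hp1 : (1 : ℝ) ≤ |(p : ℝ)| := by exact_mod_cast Int.one_le_abs hp0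
  have hH1 : 1 ≤ H := hp1.trans hp
  have hH0 : 0 < H := by linarith
  have hHG : 1 ≤ H ^ (g ^ 2) := Real.one_le_rpow hH1 (by positivity)
  have hHG0 : 0 < H ^ (g ^ 2) := by linarith
  obtain ⟨t, ht3, htm⟩ : ∃ t, t < 3 ∧ (m₀ + t) % 3 = (k + 1) % 3 :=
    ⟨(k + 1 + 2 * m₀) % 3, by omega, by omega⟩
  have hex : ∃ i, C * H ≤ X (m₀ + t + 3 * i + 1) := by
    obtain ⟨y, hy⟩ := (h.tendsto.eventually_ge_atTop (C * H)).exists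
    exact ⟨y, hy.trans (h.strictMono.monotone (by omega))⟩
  classical
  obtain ⟨i, hi, hmin⟩ : ∃ i, C * H ≤ X (m₀ + t + 3 * i + 1) ∧
      ∀ i' < i, X (m₀ + t + 3 * i' + 1) < C * H :=
    ⟨Nat.find hex, Nat.find_spec hex, fun i' hi' => not_le.1 (Nat.find_min hex hi')⟩
  obtain ⟨m, hm⟩ : ∃ m, m = m₀ + t + 3 * i := ⟨_, rfl⟩
  rw [← hm] at hi
  have hXm : X m ≤ K₁ * H ^ (g ^ 2) := by
    rw [hK₁, add_mul]
    rcases i with _ | i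
    · have h1 : X m ≤ X (m₀ + 2) := h.strictMono.monotone (by omega)
      have h2 : 0 ≤ b * b ^ g * C ^ (g ^ 2) * H ^ (g ^ 2) := by positivity
      nlinarith
    · have h1 := hmin i (by omega)
      have h2 : m = m₀ + t + 3 * i + 1 + 2 := by omega
      have h3 : 0 ≤ X (m₀ + 2) * H ^ (g ^ 2) := by positivity
      calc X m ≤ b * b ^ g * X (m₀ + t + 3 * i + 1) ^ (g ^ 2) := by rw [h2]; exact hX2 _
        _ ≤ b * b ^ g * (C * H) ^ (g ^ 2) := by
            have := h.X_pos (m₀ + t + 3 * i + 1)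
            gcongr
        _ = b * b ^ g * C ^ (g ^ 2) * H ^ (g ^ 2) := by
            rw [Real.mul_rpow (by linarith) hH0.le]; ring
        _ ≤ _ := by linarith
  have hmk : m < k := by
    have h1 : 0 < K₂ * H ^ (g ^ 2) := by positivity
    exact h.strictMono.lt_iff_lt.1 (by nlinarith)
  obtain ⟨j, rfl⟩ : ∃ j, k = m + 2 + 3 * j := ⟨(k - m - 2) / 3, by omega⟩
  have p0 := h.X_pos m
  have p1 := h.X_pos (m + 1)
  rw [Real.rpow_neg hH0.le, ← div_eq_mul_inv]
  rcases hdich m (by omega) j p q r s n H hp0 hp hq hr hi with h1 | ⟨h1, h2⟩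
  · refine le_trans ?_ h1
    calc min (1 / 2 / K₁) (1 / 8 / K₃) / H ^ (g ^ 2) ≤ 1 / 2 / K₁ / H ^ (g ^ 2) := by
          gcongr; exact min_le_left _ _
      _ = 1 / 2 / (K₁ * H ^ (g ^ 2)) := by rw [div_div]
      _ ≤ _ := by gcongr
  · rcases Nat.eq_zero_or_pos j with rfl | hj
    · exfalso
      have h3 : X (m + 2) ≤ K₂ * H ^ (g ^ 2) := by
        calc X (m + 2) ≤ b * b ^ g * X m ^ (g ^ 2) := hX2 m
          _ ≤ b * b ^ g * (4 * c * H) ^ (g ^ 2) := by gcongr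
          _ = _ := by rw [Real.mul_rpow (by positivity) hH0.le, hK₂]; ring
      have h4 : 0 < K₁ * H ^ (g ^ 2) := by positivity
      rw [mul_zero, add_zero] at hk
      linarith
    · refine le_trans ?_ (h2 hj)
      have h3 : X (m + 1) ≤ K₃ * H ^ (g ^ 2) := by
        calc X (m + 1) ≤ b * X m ^ g := hX m
          _ ≤ b * (4 * c * H) ^ g := by gcongr
          _ = K₃ * H ^ g := by rw [Real.mul_rpow (by positivity) hH0.le, hK₃]; ring
          _ ≤ K₃ * H ^ (g ^ 2) := by
              gcongr
              exact le_self_pow₀ hg two_ne_zero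
      calc min (1 / 2 / K₁) (1 / 8 / K₃) / H ^ (g ^ 2) ≤ 1 / 8 / K₃ / H ^ (g ^ 2) := by
            gcongr; exact min_le_right _ _
        _ = 1 / 8 / (K₃ * H ^ (g ^ 2)) := by rw [div_div]
        _ ≤ _ := by gcongr

end MarkoffData

theorem MarkoffSeq.symm {ξ : ℝ} {x : ℕ → Matrix (Fin 2) (Fin 2) ℤ} (hx : MarkoffSeq ξ x) (k : ℕ) :
    x (k + 1) 1 0 = x (k + 1) 0 1 :=
  (hx.1 (k + 1) (Nat.le_add_left 1 k)).symm

theorem Xnorm_eq_natCast (x : ℕ → Matrix (Fin 2) (Fin 2) ℤ) (k : ℕ) :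
    Xnorm x k =
      ((max (x k 0 0).natAbs (max (x k 0 1).natAbs (x k 1 1).natAbs) : ℕ) : ℝ) := by
  simp only [Xnorm, Nat.cast_max, Nat.cast_natAbs, Int.cast_abs]

theorem Xnorm_nonneg (x : ℕ → Matrix (Fin 2) (Fin 2) ℤ) (k : ℕ) : 0 ≤ Xnorm x k :=
  le_max_of_le_left (abs_nonneg _)

/-- The entries of a `MarkoffSeq`, reindexed to start at `0`, satisfy `MarkoffData`. -/
theorem MarkoffSeq.markoffData {ξ : ℝ} {x : ℕ → Matrix (Fin 2) (Fin 2) ℤ}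
    (hx : MarkoffSeq ξ x) :
    ∃ c b : ℝ, 0 < b ∧ (∀ k, Xnorm x (k + 1 + 1) ≤ b * Xnorm x (k + 1) ^ gold) ∧
      MarkoffData ξ (fun k => x (k + 1) 0 0) (fun k => x (k + 1) 0 1) (fun k => x (k + 1) 1 1)
        (fun k => (-1) ^ (k + 1)) (fun k => Xnorm x (k + 1)) c := by
  have hsymm := hx.symm
  obtain ⟨-, hdet, c₁, c₂, c₃, -, hc₂, hc₃, hk⟩ := hx
  replace hk := fun k => hk (k + 1) (Nat.le_add_left 1 k)
  have hmono : StrictMono fun k => Xnorm x (k + 1) :=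
    strictMono_nat_of_lt_succ fun k => (hk k).2.2.2.1
  have hentry : ∀ k i j, x (k + 2 + 1) i j = (x (k + 1) * Mmat (k + 1) * x (k + 1 + 1)) i j :=
    fun k i j => congrFun (congrFun (hk k).2.2.1.2 i) j
  simp only [Mmat, Matrix.mul_apply, Fin.sum_univ_two, Matrix.of_apply, Matrix.cons_val_zero,
    Matrix.cons_val_one, Matrix.cons_val', Matrix.cons_val_fin_one, mul_zero, add_zero] at hentry
  have hone : ∀ k, 1 ≤ Xnorm x (k + 1) := by
    intro k
    have hne : x (k + 1) 0 0 ≠ 0 := by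
      intro h0
      have := (hk k).2.2.2.2
      rw [h0, Int.cast_zero, abs_zero, mul_zero] at this
      exact this.not_ge (Xnorm_nonneg x _)
    exact le_max_of_le_left (by exact_mod_cast Int.one_le_abs hne)
  have happrox : ∀ k, c₃ / Xnorm x (k + 1) ≤ (1 + ξ ^ 2 + c₃) / Xnorm x (k + 1) := fun k =>
    div_le_div_of_nonneg_right (le_add_of_nonneg_left (by positivity)) (Xnorm_nonneg x _)
  refine ⟨1 + ξ ^ 2 + c₃, c₂, hc₂, fun k => (hk k).1.2, ?_⟩
  refine
    { sign_mul_self := fun k => ?_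
      sign_succ := fun k => by ring
      det := fun k => ?_
      rec_u := fun k => ?_
      rec_v := fun k => ?_
      rec_v' := fun k => ?_
      rec_w := fun k => ?_
      c_pos := by positivity
      one_le := hone
      abs_u_le := fun k => le_max_left _ _
      abs_v_le := fun k => le_max_of_le_right (le_max_left _ _)
      abs_w_le := fun k => le_max_of_le_right (le_max_right _ _)
      le_abs_u := fun k => (hk k).2.2.2.2.le.trans ?_
      approx_u := fun k => (hk k).2.1.1.trans (happrox k)
      approx_v := fun k => (hk k).2.1.2.trans (happrox k)
      strictMono := hmono
      tendsto := ?_ }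
  · rw [← mul_pow]; simp
  · have := hdet (k + 1) (Nat.le_add_left 1 k)
    rwa [Matrix.det_fin_two, hsymm] at this
  · rw [hentry, hsymm]; ring
  · rw [hentry]; ring
  · rw [← hsymm (k + 2), hentry, hsymm, hsymm]; ring
  · rw [hentry, hsymm]; ring
  · exact mul_le_mul_of_nonneg_right (le_add_of_nonneg_right hc₃.le) (abs_nonneg _)
  · simp only [Xnorm_eq_natCast] at hmono ⊢
    exact tendsto_natCast_atTop_atTop.comp
      (StrictMono.tendsto_atTop fun a b hab => Nat.cast_lt.1 (hmono hab))

theorem abs_coeff_le_polyNorm (R : Polynomial ℤ) (i : ℕ) :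
    |(R.coeff i : ℝ)| ≤ (polyNorm R : ℝ) := by
  rw [← Int.cast_abs, ← Nat.cast_natAbs, Nat.cast_le]
  by_cases hi : i ∈ R.support
  · exact Finset.le_sup (f := fun j => (R.coeff j).natAbs) hi
  · simp [Polynomial.notMem_support_iff.1 hi]

theorem one_le_gold : 1 ≤ gold := Real.one_lt_goldenRatio.le

theorem stmt15 (ξ : ℝ) (x : ℕ → Matrix (Fin 2) (Fin 2) ℤ) (hx : MarkoffSeq ξ x) :
    ∃ c₄ c₅ : ℝ, 0 < c₄ ∧ 0 < c₅ ∧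
      ∀ R : Polynomial ℤ, R.natDegree = 3 → ∀ k, 1 ≤ k →
        Xnorm x k > c₄ * (polyNorm R : ℝ) ^ (gold^2) →
        distInt ((x k 0 0 : ℝ) * Polynomial.aeval ξ R)
          ≥ c₅ * (polyNorm R : ℝ) ^ (-(gold^2)) := by
  obtain ⟨c, b, hb, hX, h⟩ := hx.markoffData
  obtain ⟨c₄, c₅, hc₄, hc₅, hbound⟩ := h.exists_lower_bound one_le_gold hb hX
  refine ⟨c₄, c₅, hc₄, hc₅, fun R hR k hk hlt => ?_⟩
  obtain ⟨k, rfl⟩ := Nat.exists_eq_add_of_le' hk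
  have hlead : R.coeff 3 ≠ 0 := by
    rw [← hR, Polynomial.coeff_natDegree, Polynomial.leadingCoeff_ne_zero]
    rintro rfl
    simp at hR
  have heval : Polynomial.aeval ξ R =
      R.coeff 3 * ξ ^ 3 + R.coeff 2 * ξ ^ 2 + R.coeff 1 * ξ + R.coeff 0 := by
    rw [Polynomial.aeval_eq_sum_range, hR]
    simp only [Finset.sum_range_succ, Finset.sum_range_zero, zsmul_eq_mul]
    ring
  rw [distInt, heval]
  exact hbound _ _ _ _ _ _ hlead (abs_coeff_le_polyNorm R 3) (abs_coeff_le_polyNorm R 2)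
    (abs_coeff_le_polyNorm R 1) k hlt
end

section
/- There exists a constant c > 0 such that for every integer k ≥ 1: (i) there exists an integer n with |x_{k,0}·x_{k+1,0}·x_{k+2,2}·x_{k+4,2}·ξ² − 8·(−1)^k·x_{k+1,2}·ξ − n| ≤ c/X_{k+1}; (ii) there exists an integer n with |x_{k,0}·x_{k+1,0}·x_{k+2,0}·x_{k+4,0}·ξ⁶ − 20·(−1)^k·x_{k+1,2}·ξ − n| ≤ c/X_{k+1}. -/
open Polynomial Filter

/-- Normalised discriminant attached to the ratios `α = a / y`, `β = b / y` of a Markoff triple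
`(a, b, y)`: one has `a = D / (3 β)`, `b = D / (3 α)` and `y = D / (3 α β)`. -/
noncomputable def ratioD (α β : ℝ) : ℝ := 1 + α ^ 2 + β ^ 2

noncomputable def ratioG (α β : ℝ) : ℝ := (1 + β ^ 2) ^ 2 + α ^ 2

lemma ratioD_pos (α β : ℝ) : 0 < ratioD α β := by unfold ratioD; positivity

lemma ratioG_pos (α β : ℝ) : 0 < ratioG α β := by unfold ratioG; positivity

/-- Entries of four symmetric matrices `x k`, `x (k+1)`, `x (k+2)`, `x (k+4)` of a Markoff sequence
expressed through `s = (-1) ^ k`, the ratios `α`, `β` of upper left entries, and the slope `ρ` of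
`x (k+2)`. -/
structure RatioForm (s α β ρ a₀ a₂ b₀ b₁ b₂ y₀ y₁ y₂ z₀ z₁ z₂ : ℝ) : Prop where
  a₀_eq : a₀ = ratioD α β / (3 * β)
  a₂_eq : a₂ = a₀ * ρ ^ 2 + 2 * s * β * ρ + 3 * β * (1 + β ^ 2) / ratioD α β
  b₀_eq : b₀ = ratioD α β / (3 * α)
  b₁_eq : b₁ = b₀ * ρ - s * α
  b₂_eq : b₂ = b₀ * ρ ^ 2 - 2 * s * α * ρ + 3 * α * (1 + α ^ 2) / ratioD α β
  y₀_eq : y₀ = ratioD α β / (3 * α * β)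
  y₁_eq : y₁ = y₀ * ρ
  y₂_eq : y₂ = y₀ * ρ ^ 2 + 3 * α * β / ratioD α β
  z₀_eq : z₀ = ratioG α β * ratioD α β / (3 * α ^ 3 * β ^ 2)
  z₁_eq : z₁ = z₀ * ρ - s * (1 + β ^ 2) / α
  z₂_eq : z₂ = z₀ * ρ ^ 2 - 2 * s * ρ * (1 + β ^ 2) / α + 3 * α * β ^ 2 / ratioD α β

/-- The quotient `(ξ - ρ) / (α β) ^ 2`, where `τ = z₀ (z₀ ξ - z₁)`. -/
noncomputable def scaledShift (s α β τ : ℝ) : ℝ :=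
  9 * τ * α ^ 4 * β ^ 2 / (ratioG α β ^ 2 * ratioD α β ^ 2)
    - 3 * s * (1 + β ^ 2) / (ratioD α β * ratioG α β)

noncomputable def shift (s α β τ : ℝ) : ℝ := α ^ 2 * β ^ 2 * scaledShift s α β τ

noncomputable def linErr (α β τ : ℝ) : ℝ := τ * ratioD α β ^ 2 / (9 * ratioG α β)

noncomputable def quadErr (s α β τ : ℝ) : ℝ :=
  s * ratioD α β ^ 2 / (9 * ratioG α β)
    + τ * α ^ 2 * β ^ 2 * ratioD α β * (1 + β ^ 2) / (3 * ratioG α β ^ 2)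

noncomputable def cubErr (s α β τ : ℝ) : ℝ := β ^ 2 * ratioD α β ^ 2 * scaledShift s α β τ / 9

noncomputable def leadTerm (α β : ℝ) : ℝ :=
  ratioD α β ^ 4 * ratioG α β / (81 * α ^ 5 * β ^ 4)

noncomputable def linTerm (α β : ℝ) : ℝ := ratioD α β ^ 3 * (1 + β ^ 2) / (27 * α ^ 3 * β ^ 2)

noncomputable def quadTerm (α β : ℝ) : ℝ := ratioD α β ^ 2 / (9 * α)

lemma leadTerm_mul_shift {α β : ℝ} (hα : α ≠ 0) (hβ : β ≠ 0) (s τ : ℝ) :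
    leadTerm α β * shift s α β τ = α * linErr α β τ - s * linTerm α β := by
  have hD := (ratioD_pos α β).ne'
  have hG := (ratioG_pos α β).ne'
  simp only [leadTerm, shift, scaledShift, linErr, linTerm]
  field_simp
  ring

lemma linTerm_mul_shift {α β : ℝ} (hα : α ≠ 0) (hβ : β ≠ 0) (s τ : ℝ) :
    linTerm α β * shift s α β τ = α * quadErr s α β τ - s * quadTerm α β := by
  have hD := (ratioD_pos α β).ne'
  have hG := (ratioG_pos α β).ne'
  have hGe : ratioG α β = (1 + β ^ 2) ^ 2 + α ^ 2 := rfl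
  simp only [quadErr, shift, scaledShift, quadTerm, linTerm]
  field_simp
  rw [hGe]
  ring

lemma quadTerm_mul_shift {α : ℝ} (hα : α ≠ 0) (s β τ : ℝ) :
    quadTerm α β * shift s α β τ = α * cubErr s α β τ := by
  simp only [quadTerm, shift, cubErr]
  field_simp

/-- The integer close to `a₀ b₀ y₂ z₂ ξ ^ 2 - 8 s b₂ ξ`. -/
def approxFst {R : Type*} [CommRing R] (s a₂ b₀ b₁ b₂ y₁ y₂ : R) : R :=
  3 * b₀ * y₁ ^ 2 * y₂ ^ 2 + 3 * b₀ * b₁ ^ 2 * y₂ ^ 2 - 3 * b₀ * y₂ ^ 2 - 2 * s * b₁ * y₂ ^ 2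
    - a₂ * b₁ ^ 2 * y₂ - 3 * a₂ * y₂ + 12 * b₂

/-- The integer close to `a₀ b₀ y₀ z₀ ξ ^ 6 - 20 s b₂ ξ`. -/
def approxSnd {R : Type*} [CommRing R] (s a₂ b₀ b₁ b₂ y₁ y₂ : R) : R :=
  3 * b₀ * y₁ ^ 2 * y₂ ^ 2 + 3 * b₀ * b₁ ^ 2 * y₂ ^ 2 - 6 * b₀ * y₂ ^ 2 - 4 * s * b₁ * y₂ ^ 2
    - a₂ * b₁ ^ 2 * y₂ - 2 * s * b₁ * b₂ ^ 2 - 5 * a₂ * y₂ - 3 * b₀ * b₂ ^ 2 + 30 * b₂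

noncomputable def mainErrFst (s α β ρ : ℝ) : ℝ :=
  4 / 3 * s * ratioD α β * ρ ^ 3 + (11 - α ^ 2) * ρ ^ 2
    + 12 * s * β ^ 2 * (4 + α ^ 2) / ratioD α β * ρ
    + (-36 * (1 + α ^ 2 - β ^ 2) / ratioD α β
      - 9 * α ^ 2 * β ^ 2 * (5 + α ^ 2) / ratioD α β ^ 2)

noncomputable def mainErrSnd (s α β ρ : ℝ) : ℝ :=
  20 / 3 * s * ratioD α β * ρ ^ 3 + (25 - 15 * α ^ 2) * ρ ^ 2
    + s * (-6 + 90 * β ^ 2 + 12 * α ^ 2 + 18 * α ^ 4) / ratioD α β * ρ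
    + ((-81 + 63 * β ^ 2 - 90 * α ^ 2 - 9 * α ^ 4) / ratioD α β
      + (9 * α ^ 4 * β ^ 2 - 63 * α ^ 2 * β ^ 2) / ratioD α β ^ 2)

noncomputable def shiftErr (s α β ρ τ : ℝ) : ℝ :=
  ratioD α β * ρ ^ 2 * β ^ 2 * scaledShift s α β τ / 3
    + (-2 * s * ρ + 3 * (1 + α ^ 2) / ratioD α β) * shift s α β τ

namespace RatioForm

variable {s α β ρ a₀ a₂ b₀ b₁ b₂ y₀ y₁ y₂ z₀ z₁ z₂ : ℝ}

lemma mainFst (h : RatioForm s α β ρ a₀ a₂ b₀ b₁ b₂ y₀ y₁ y₂ z₀ z₁ z₂)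
    (hs : s = 1 ∨ s = -1) (hα : α ≠ 0) (hβ : β ≠ 0) :
    (ρ ^ 2 + (3 * α * β / ratioD α β) ^ 2) * (leadTerm α β * ρ ^ 4 - 4 * s * linTerm α β * ρ ^ 3
        + 6 * quadTerm α β * ρ ^ 2) - 8 * s * b₂ * ρ - approxFst s a₂ b₀ b₁ b₂ y₁ y₂
      = α * mainErrFst s α β ρ := by
  have hD := (ratioD_pos α β).ne'
  rw [h.a₂_eq, h.b₂_eq, h.b₁_eq, h.y₂_eq, h.y₁_eq, h.a₀_eq, h.b₀_eq, h.y₀_eq]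
  simp only [leadTerm, linTerm, quadTerm, approxFst, mainErrFst, ratioG]
  have hDe : ratioD α β = 1 + α ^ 2 + β ^ 2 := rfl
  generalize ratioD α β = D at *
  rcases hs with rfl | rfl <;>
  · field_simp
    rw [hDe]
    ring

lemma mainSnd (h : RatioForm s α β ρ a₀ a₂ b₀ b₁ b₂ y₀ y₁ y₂ z₀ z₁ z₂)
    (hs : s = 1 ∨ s = -1) (hα : α ≠ 0) (hβ : β ≠ 0) :
    leadTerm α β * ρ ^ 6 - 6 * s * linTerm α β * ρ ^ 5 + 15 * quadTerm α β * ρ ^ 4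
        - 20 * s * b₂ * ρ - approxSnd s a₂ b₀ b₁ b₂ y₁ y₂
      = α * mainErrSnd s α β ρ := by
  have hD := (ratioD_pos α β).ne'
  rw [h.a₂_eq, h.b₂_eq, h.b₁_eq, h.y₂_eq, h.y₁_eq, h.a₀_eq, h.b₀_eq, h.y₀_eq]
  simp only [leadTerm, linTerm, quadTerm, approxSnd, mainErrSnd, ratioG]
  have hDe : ratioD α β = 1 + α ^ 2 + β ^ 2 := rfl
  generalize ratioD α β = D at *
  rcases hs with rfl | rfl <;>
  · field_simp
    rw [hDe]
    ring

lemma eq_add_shift (h : RatioForm s α β ρ a₀ a₂ b₀ b₁ b₂ y₀ y₁ y₂ z₀ z₁ z₂)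
    (hα : α ≠ 0) (hβ : β ≠ 0) (ξ : ℝ) : ξ = ρ + shift s α β (z₀ * (z₀ * ξ - z₁)) := by
  have hD := (ratioD_pos α β).ne'
  have hG := (ratioG_pos α β).ne'
  rw [h.z₁_eq, h.z₀_eq]
  simp only [shift, scaledShift]
  field_simp
  ring

lemma prod_snd (h : RatioForm s α β ρ a₀ a₂ b₀ b₁ b₂ y₀ y₁ y₂ z₀ z₁ z₂)
    (hα : α ≠ 0) (hβ : β ≠ 0) : a₀ * b₀ * y₀ * z₀ = leadTerm α β := by
  have hD := (ratioD_pos α β).ne'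
  rw [h.a₀_eq, h.b₀_eq, h.y₀_eq, h.z₀_eq]
  simp only [leadTerm]
  field_simp
  ring

lemma prod_fst (h : RatioForm s α β ρ a₀ a₂ b₀ b₁ b₂ y₀ y₁ y₂ z₀ z₁ z₂)
    (hα : α ≠ 0) (hβ : β ≠ 0) :
    a₀ * b₀ * y₂ * z₂ = (ρ ^ 2 + (3 * α * β / ratioD α β) ^ 2) *
      (leadTerm α β * ρ ^ 2 - 2 * s * ρ * linTerm α β + quadTerm α β) := by
  have hD := (ratioD_pos α β).ne'
  rw [h.y₂_eq, h.z₂_eq, h.a₀_eq, h.b₀_eq, h.y₀_eq, h.z₀_eq]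
  simp only [leadTerm, linTerm, quadTerm]
  field_simp
  ring

lemma b₂_mul_shift (h : RatioForm s α β ρ a₀ a₂ b₀ b₁ b₂ y₀ y₁ y₂ z₀ z₁ z₂)
    (hα : α ≠ 0) (τ : ℝ) :
    b₂ * shift s α β τ = α * shiftErr s α β ρ τ := by
  have hD := (ratioD_pos α β).ne'
  rw [h.b₂_eq, h.b₀_eq]
  simp only [shiftErr, shift]
  field_simp
  ring

end RatioForm

noncomputable def totalErrFst (s α β ρ τ : ℝ) : ℝ :=
  mainErrFst s α β ρ - 8 * s * shiftErr s α β ρ τ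
    + (ρ ^ 2 + (3 * α * β / ratioD α β) ^ 2) *
      (2 * ρ ^ 3 * linErr α β τ
        + ρ ^ 2 * (linErr α β τ * shift s α β τ - s * quadErr s α β τ)
        - 4 * s * ρ ^ 2 * quadErr s α β τ
        - 2 * s * ρ * (quadErr s α β τ * shift s α β τ - s * cubErr s α β τ)
        + 2 * ρ * cubErr s α β τ + cubErr s α β τ * shift s α β τ)

noncomputable def totalErrSnd (s α β ρ τ : ℝ) : ℝ :=
  mainErrSnd s α β ρ - 20 * s * shiftErr s α β ρ τ
    + 6 * ρ ^ 5 * linErr α β τ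
    + 15 * ρ ^ 4 * (linErr α β τ * shift s α β τ - s * quadErr s α β τ)
    + (linErr α β τ * shift s α β τ ^ 2 - s * quadErr s α β τ * shift s α β τ + cubErr s α β τ) *
      (20 * ρ ^ 3 + 15 * ρ ^ 2 * shift s α β τ + 6 * ρ * shift s α β τ ^ 2 + shift s α β τ ^ 3)

namespace RatioForm

variable {s α β ρ a₀ a₂ b₀ b₁ b₂ y₀ y₁ y₂ z₀ z₁ z₂ : ℝ}

lemma fst_eq (h : RatioForm s α β ρ a₀ a₂ b₀ b₁ b₂ y₀ y₁ y₂ z₀ z₁ z₂)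
    (hs : s = 1 ∨ s = -1) (hα : α ≠ 0) (hβ : β ≠ 0) (ξ : ℝ) :
    a₀ * b₀ * y₂ * z₂ * ξ ^ 2 - 8 * s * b₂ * ξ - approxFst s a₂ b₀ b₁ b₂ y₁ y₂
      = α * totalErrFst s α β ρ (z₀ * (z₀ * ξ - z₁)) := by
  have hξ := h.eq_add_shift hα hβ ξ
  generalize z₀ * (z₀ * ξ - z₁) = τ at *
  have hP := leadTerm_mul_shift hα hβ s τ
  have hK := linTerm_mul_shift hα hβ s τ
  have hQ := quadTerm_mul_shift hα s β τ
  have hm := h.mainFst hs hα hβ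
  have hb := h.b₂_mul_shift hα τ
  have hss : s ^ 2 = 1 := by rcases hs with rfl | rfl <;> norm_num
  rw [h.prod_fst hα hβ, hξ]
  simp only [totalErrFst]
  generalize shift s α β τ = η at *
  generalize (3 * α * β / ratioD α β) ^ 2 = ε at *
  linear_combination hm - 8 * s * hb + (ρ ^ 2 + ε) * ((2 * ρ ^ 3 + ρ ^ 2 * η) * hP
    - (s * ρ ^ 2 + 4 * s * ρ ^ 2 + 2 * s * ρ * η) * hK
    + (2 * ρ + η + 2 * s ^ 2 * ρ) * hQ + (5 * ρ ^ 2 * quadTerm α β) * hss)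

lemma snd_eq (h : RatioForm s α β ρ a₀ a₂ b₀ b₁ b₂ y₀ y₁ y₂ z₀ z₁ z₂)
    (hs : s = 1 ∨ s = -1) (hα : α ≠ 0) (hβ : β ≠ 0) (ξ : ℝ) :
    a₀ * b₀ * y₀ * z₀ * ξ ^ 6 - 20 * s * b₂ * ξ - approxSnd s a₂ b₀ b₁ b₂ y₁ y₂
      = α * totalErrSnd s α β ρ (z₀ * (z₀ * ξ - z₁)) := by
  have hξ := h.eq_add_shift hα hβ ξ
  generalize z₀ * (z₀ * ξ - z₁) = τ at *
  have hP := leadTerm_mul_shift hα hβ s τ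
  have hK := linTerm_mul_shift hα hβ s τ
  have hQ := quadTerm_mul_shift hα s β τ
  have hm := h.mainSnd hs hα hβ
  have hb := h.b₂_mul_shift hα τ
  have hss : s ^ 2 = 1 := by rcases hs with rfl | rfl <;> norm_num
  rw [h.prod_snd hα hβ, hξ]
  simp only [totalErrSnd]
  generalize shift s α β τ = η at *
  have h2 : leadTerm α β * η ^ 2
      = quadTerm α β + α * (linErr α β τ * η - s * quadErr s α β τ) := by
    linear_combination η * hP - s * hK + quadTerm α β * hss
  have h3 : leadTerm α β * η ^ 3
      = α * (linErr α β τ * η ^ 2 - s * quadErr s α β τ * η + cubErr s α β τ) := by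
    linear_combination η * h2 + hQ
  linear_combination hm - 20 * s * hb + 6 * ρ ^ 5 * hP + 15 * ρ ^ 4 * h2
    + (20 * ρ ^ 3 + 15 * ρ ^ 2 * η + 6 * ρ * η ^ 2 + η ^ 3) * h3

end RatioForm

lemma exists_bound_on_box {f : ℝ × ℝ × ℝ × ℝ → ℝ} (hf : Continuous f) (C : ℝ) :
    ∃ K, ∀ α β ρ τ : ℝ, |α| ≤ C → |β| ≤ C → |ρ| ≤ C → |τ| ≤ C → |f (α, β, ρ, τ)| ≤ K := by
  have hc : IsCompact (Set.Icc (-C) C ×ˢ Set.Icc (-C) C ×ˢ Set.Icc (-C) C ×ˢ Set.Icc (-C) C) :=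
    isCompact_Icc.prod (isCompact_Icc.prod (isCompact_Icc.prod isCompact_Icc))
  obtain ⟨K, hK⟩ := hc.exists_bound_of_continuousOn hf.continuousOn
  refine ⟨K, fun α β ρ τ h1 h2 h3 h4 => hK _ ?_⟩
  exact ⟨abs_le.1 h1, abs_le.1 h2, abs_le.1 h3, abs_le.1 h4⟩

lemma continuous_totalErrFst (s : ℝ) :
    Continuous fun p : ℝ × ℝ × ℝ × ℝ => totalErrFst s p.1 p.2.1 p.2.2.1 p.2.2.2 := by
  simp only [totalErrFst, shiftErr, mainErrFst, linErr, quadErr, cubErr, shift, scaledShift,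
    ratioD, ratioG]
  fun_prop (disch := intros; positivity)

lemma continuous_totalErrSnd (s : ℝ) :
    Continuous fun p : ℝ × ℝ × ℝ × ℝ => totalErrSnd s p.1 p.2.1 p.2.2.1 p.2.2.2 := by
  simp only [totalErrSnd, shiftErr, mainErrSnd, linErr, quadErr, cubErr, shift, scaledShift,
    ratioD, ratioG]
  fun_prop (disch := intros; positivity)

lemma ratioForm_of_entries {s a₀ a₁ a₂ b₀ b₁ b₂ y₀ y₁ y₂ z₀ z₁ z₂ : ℝ} (hs : s = 1 ∨ s = -1)
    (ha : a₀ ≠ 0) (hb : b₀ ≠ 0) (hy : y₀ ≠ 0) (hda : a₀ * a₂ - a₁ * a₁ = 1)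
    (hdb : b₀ * b₂ - b₁ * b₁ = 1) (hdy : y₀ * y₂ - y₁ * y₁ = 1)
    (hy00 : y₀ = 3 * a₀ * b₀ + s * a₀ * b₁ - s * a₁ * b₀)
    (hy01 : y₁ = 3 * a₀ * b₁ + s * a₀ * b₂ - s * a₁ * b₁)
    (hy10 : y₁ = 3 * a₁ * b₀ + s * a₁ * b₁ - s * a₂ * b₀)
    (hz00 : z₀ = y₀ ^ 2 * (9 * b₀ + 6 * s * b₁ + b₂) + 2 * y₀ * y₁ * (-3 * s * b₀ - b₁)
      + y₁ ^ 2 * b₀)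
    (hz01 : z₁ = y₀ * y₁ * (9 * b₀ + 6 * s * b₁ + b₂)
      + (y₀ * y₂ + y₁ ^ 2) * (-3 * s * b₀ - b₁) + y₁ * y₂ * b₀)
    (hz11 : z₂ = y₁ ^ 2 * (9 * b₀ + 6 * s * b₁ + b₂) + 2 * y₁ * y₂ * (-3 * s * b₀ - b₁)
      + y₂ ^ 2 * b₀) :
    RatioForm s (a₀ / y₀) (b₀ / y₀) (y₁ / y₀) a₀ a₂ b₀ b₁ b₂ y₀ y₁ y₂ z₀ z₁ z₂ := by
  have hss : s ^ 2 = 1 := by rcases hs with rfl | rfl <;> norm_num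
  have h1 : y₀ * b₁ = y₁ * b₀ - s * a₀ := by
    linear_combination (-b₀) * hy01 + b₁ * hy00 - s * a₀ * hdb
  have h2 : y₀ * a₁ = a₀ * y₁ + s * b₀ := by
    linear_combination (-a₀) * hy10 + a₁ * hy00 + s * b₀ * hda
  have hM : 3 * a₀ * b₀ * y₀ = y₀ ^ 2 + a₀ ^ 2 + b₀ ^ 2 := by
    linear_combination (-y₀) * hy00 - s * a₀ * h1 + s * b₀ * h2 + (a₀ ^ 2 + b₀ ^ 2) * hss
  have hα : a₀ / y₀ ≠ 0 := div_ne_zero ha hy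
  have hβ : b₀ / y₀ ≠ 0 := div_ne_zero hb hy
  have hD := (ratioD_pos (a₀ / y₀) (b₀ / y₀)).ne'
  have hDe : ratioD (a₀ / y₀) (b₀ / y₀) = 1 + (a₀ / y₀) ^ 2 + (b₀ / y₀) ^ 2 := rfl
  have hyD : y₀ = ratioD (a₀ / y₀) (b₀ / y₀) / (3 * (a₀ / y₀) * (b₀ / y₀)) := by
    rw [hDe]; field_simp; linear_combination hM
  have haα : a₀ = a₀ / y₀ * y₀ := by field_simp
  have hbβ : b₀ = b₀ / y₀ * y₀ := by field_simp
  have hyρ : y₁ = y₀ * (y₁ / y₀) := by field_simp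
  have hb1 : b₁ = b₀ * (y₁ / y₀) - s * (a₀ / y₀) := by field_simp; linear_combination h1
  have ha1 : a₁ = a₀ * (y₁ / y₀) + s * (b₀ / y₀) := by field_simp; linear_combination h2
  have haD : a₀ = ratioD (a₀ / y₀) (b₀ / y₀) / (3 * (b₀ / y₀)) := by
    rw [hDe]; field_simp; linear_combination hM
  have hbD : b₀ = ratioD (a₀ / y₀) (b₀ / y₀) / (3 * (a₀ / y₀)) := by
    rw [hDe]; field_simp; linear_combination hM
  have ha2 : a₂ = (1 + a₁ ^ 2) / a₀ := by field_simp; linear_combination hda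
  have hb2 : b₂ = (1 + b₁ ^ 2) / b₀ := by field_simp; linear_combination hdb
  have hy2 : y₂ = (1 + y₁ ^ 2) / y₀ := by field_simp; linear_combination hdy
  clear hy00 hy01 hy10 hda hdb hdy h1 h2 hM haα hbβ
  have hGe : ratioG (a₀ / y₀) (b₀ / y₀) = (1 + (b₀ / y₀) ^ 2) ^ 2 + (a₀ / y₀) ^ 2 := rfl
  generalize a₀ / y₀ = α at *
  generalize b₀ / y₀ = β at *
  generalize y₁ / y₀ = ρ at *
  have hb2' : b₂ = b₀ * ρ ^ 2 - 2 * s * α * ρ + 3 * α * (1 + α ^ 2) / ratioD α β := by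
    rw [hb2, hb1, hbD]
    field_simp
    linear_combination 9 * α ^ 4 * hss
  have hy2' : y₂ = y₀ * ρ ^ 2 + 3 * α * β / ratioD α β := by
    rw [hy2, hyρ, hyD]
    field_simp
    ring
  refine ⟨haD, ?_, hbD, hb1, hb2', hyD, hyρ, hy2', ?_, ?_, ?_⟩
  · rw [ha2, ha1, haD]
    field_simp
    linear_combination 9 * β ^ 4 * hss
  · rw [hz00, hb2', hb1, hyρ, hyD, hbD, hGe]
    generalize ratioD α β = D at *
    rcases hs with rfl | rfl <;>
    · field_simp
      rw [hDe]
      ring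
  · rw [hz01, hz00, hb2', hb1, hy2', hyρ, hyD, hbD]
    generalize ratioD α β = D at *
    rcases hs with rfl | rfl <;>
    · field_simp
      rw [hDe]
      ring
  · rw [hz11, hz00, hb2', hb1, hy2', hyρ, hyD, hbD]
    generalize ratioD α β = D at *
    rcases hs with rfl | rfl <;>
    · field_simp
      rw [hDe]
      ring

lemma abs_entries_le_Xnorm (x : ℕ → Matrix (Fin 2) (Fin 2) ℤ) (k : ℕ) :
    |(x k 0 0 : ℝ)| ≤ Xnorm x k ∧ |(x k 0 1 : ℝ)| ≤ Xnorm x k :=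
  ⟨le_max_left _ _, (le_max_left _ _).trans (le_max_right _ _)⟩

namespace MarkoffSeq

variable {ξ : ℝ} {x : ℕ → Matrix (Fin 2) (Fin 2) ℤ}

lemma apply_zero_zero_ne_zero (hx : MarkoffSeq ξ x) {k : ℕ} (hk : 1 ≤ k) :
    (x k 0 0 : ℝ) ≠ 0 := by
  obtain ⟨-, -, _, _, _, -, -, -, h⟩ := hx
  intro h0
  have h1 := (h k hk).2.2.2.2
  have h2 := (abs_nonneg _).trans (abs_entries_le_Xnorm x k).1
  rw [h0, abs_zero, mul_zero] at h1
  exact h1.not_ge h2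

lemma Xnorm_pos (hx : MarkoffSeq ξ x) {k : ℕ} (hk : 1 ≤ k) : 0 < Xnorm x k :=
  (abs_pos.2 (hx.apply_zero_zero_ne_zero hk)).trans_le (abs_entries_le_Xnorm x k).1

lemma det_eq (hx : MarkoffSeq ξ x) {k : ℕ} (hk : 1 ≤ k) :
    (x k 0 0 : ℝ) * x k 1 1 - x k 0 1 * x k 0 1 = 1 := by
  have h := hx.2.1 k hk
  rw [Matrix.det_fin_two, ← hx.1 k hk] at h
  exact_mod_cast h

lemma mul_entries (hx : MarkoffSeq ξ x) {k : ℕ} (hk : 1 ≤ k) :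
    (x (k + 2) 0 0 : ℝ) = 3 * x k 0 0 * x (k + 1) 0 0 + (-1) ^ k * x k 0 0 * x (k + 1) 0 1
        - (-1) ^ k * x k 0 1 * x (k + 1) 0 0 ∧
      (x (k + 2) 0 1 : ℝ) = 3 * x k 0 0 * x (k + 1) 0 1 + (-1) ^ k * x k 0 0 * x (k + 1) 1 1
        - (-1) ^ k * x k 0 1 * x (k + 1) 0 1 ∧
      (x (k + 2) 0 1 : ℝ) = 3 * x k 0 1 * x (k + 1) 0 0 + (-1) ^ k * x k 0 1 * x (k + 1) 0 1
        - (-1) ^ k * x k 1 1 * x (k + 1) 0 0 ∧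
      (x (k + 2) 1 1 : ℝ) = 3 * x k 0 1 * x (k + 1) 0 1 + (-1) ^ k * x k 0 1 * x (k + 1) 1 1
        - (-1) ^ k * x k 1 1 * x (k + 1) 0 1 := by
  obtain ⟨hsymm, -, _, _, _, -, -, -, h⟩ := hx
  have hm := (h k hk).2.2.1.2
  have hA := hsymm k hk
  have hB := hsymm (k + 1) (by lia)
  have hY := hsymm (k + 2) (by lia)
  have e (i j : Fin 2) := congrArg (fun A : Matrix (Fin 2) (Fin 2) ℤ => ((A i j : ℤ) : ℝ)) hm
  have h00 := e 0 0
  have h01 := e 0 1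
  have h10 := e 1 0
  have h11 := e 1 1
  simp only [Matrix.mul_apply, Fin.sum_univ_two, Mmat, Matrix.of_apply, Matrix.cons_val_zero,
    Matrix.cons_val_one, Matrix.cons_val', Matrix.cons_val_fin_one, ← hA, ← hB, ← hY, pow_succ]
    at h00 h01 h10 h11
  push_cast at h00 h01 h10 h11
  refine ⟨?_, ?_, ?_, ?_⟩
  · rw [h00]; ring
  · rw [h01]; ring
  · rw [h10]; ring
  · rw [h11]; ring

lemma ratioForm (hx : MarkoffSeq ξ x) {k : ℕ} (hk : 1 ≤ k) :
    RatioForm ((-1) ^ k) (x k 0 0 / x (k + 2) 0 0) (x (k + 1) 0 0 / x (k + 2) 0 0)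
      (x (k + 2) 0 1 / x (k + 2) 0 0) (x k 0 0) (x k 1 1) (x (k + 1) 0 0) (x (k + 1) 0 1)
      (x (k + 1) 1 1) (x (k + 2) 0 0) (x (k + 2) 0 1) (x (k + 2) 1 1)
      (x (k + 4) 0 0) (x (k + 4) 0 1) (x (k + 4) 1 1) := by
  have hs := neg_one_pow_eq_or ℝ k
  obtain ⟨y00, y01, y10, -⟩ := hx.mul_entries hk
  obtain ⟨u00, u01, u10, u11⟩ := hx.mul_entries (k := k + 1) (by lia)
  obtain ⟨z00, z01, -, z11⟩ := hx.mul_entries (k := k + 2) (by lia)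
  simp only [add_assoc, Nat.reduceAdd, pow_succ, mul_neg, mul_one] at u00 u01 u10 u11
  simp only [add_assoc, Nat.reduceAdd, pow_succ, mul_neg, mul_one, neg_neg] at z00 z01 z11
  refine ratioForm_of_entries hs (hx.apply_zero_zero_ne_zero hk)
    (hx.apply_zero_zero_ne_zero (by lia)) (hx.apply_zero_zero_ne_zero (by lia)) (hx.det_eq hk)
    (hx.det_eq (by lia)) (hx.det_eq (by lia)) y00 y01 y10 ?_ ?_ ?_
  · rw [z00, u10, u00]
    generalize ((-1 : ℝ)) ^ k = s at *
    rcases hs with rfl | rfl <;> ring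
  · rw [z01, u01, u11]
    generalize ((-1 : ℝ)) ^ k = s at *
    rcases hs with rfl | rfl <;> ring
  · rw [z11, u01, u11]
    generalize ((-1 : ℝ)) ^ k = s at *
    rcases hs with rfl | rfl <;> ring

/-- The four parameters of `MarkoffSeq.ratioForm` stay in a fixed box, and the first one is
`O(1 / Xnorm x (k + 1))`. -/
lemma exists_param_bounds (hx : MarkoffSeq ξ x) : ∃ C A : ℝ, 0 < A ∧ ∀ k, 1 ≤ k →
    |(x k 0 0 / x (k + 2) 0 0 : ℝ)| ≤ C ∧ |(x (k + 1) 0 0 / x (k + 2) 0 0 : ℝ)| ≤ C ∧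
      |(x (k + 2) 0 1 / x (k + 2) 0 0 : ℝ)| ≤ C ∧
      |(x (k + 4) 0 0 : ℝ) * (x (k + 4) 0 0 * ξ - x (k + 4) 0 1)| ≤ C ∧
      |(x k 0 0 / x (k + 2) 0 0 : ℝ)| ≤ A / Xnorm x (k + 1) := by
  obtain ⟨-, -, c₁, c₂, c₃, -, -, hc₃, h⟩ := id hx
  have hξ : 0 < 1 + ξ ^ 2 := by positivity
  refine ⟨1 + ξ ^ 2 + c₃, (1 + 2 * (1 + ξ ^ 2 + c₃) ^ 2) * (1 + ξ ^ 2), by positivity,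
    fun k hk => ?_⟩
  have h0 := (h k hk).2.2.2.1
  have h1 := (h (k + 1) (by lia)).2.2.2
  have h2 := (h (k + 2) (by lia)).2.2.2.2
  have hy := hx.apply_zero_zero_ne_zero (k := k + 2) (by lia)
  have hb := hx.apply_zero_zero_ne_zero (k := k + 1) (by lia)
  have ha := hx.apply_zero_zero_ne_zero hk
  have hX1 := hx.Xnorm_pos (k := k + 1) (by lia)
  have hX4 := hx.Xnorm_pos (k := k + 4) (by lia)
  have ratio {t : ℝ} (ht : |t| ≤ Xnorm x (k + 2)) :
      |t / x (k + 2) 0 0| ≤ 1 + ξ ^ 2 + c₃ := by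
    have : |t / x (k + 2) 0 0| ≤ 1 + ξ ^ 2 := by
      rw [abs_div, div_le_iff₀ (abs_pos.2 hy)]
      exact ht.trans h2.le
    linarith
  have hα := ratio ((abs_entries_le_Xnorm x k).1.trans (h0.trans h1.1).le)
  have hβ := ratio ((abs_entries_le_Xnorm x (k + 1)).1.trans h1.1.le)
  refine ⟨hα, hβ, ratio (abs_entries_le_Xnorm x (k + 2)).2, ?_, ?_⟩
  · rw [abs_mul]
    have := mul_le_mul (abs_entries_le_Xnorm x (k + 4)).1 (h (k + 4) (by lia)).2.1.1
      (abs_nonneg _) hX4.le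
    rw [mul_div_cancel₀ _ hX4.ne'] at this
    linarith
  · have hbD := (hx.ratioForm hk).b₀_eq
    have hα0 : (x k 0 0 / x (k + 2) 0 0 : ℝ) ≠ 0 := div_ne_zero ha hy
    generalize (x k 0 0 / x (k + 2) 0 0 : ℝ) = α at *
    generalize (x (k + 1) 0 0 / x (k + 2) 0 0 : ℝ) = β at *
    have hD := ratioD_pos α β
    have hDle : ratioD α β ≤ 1 + 2 * (1 + ξ ^ 2 + c₃) ^ 2 := by
      have hα2 := pow_le_pow_left₀ (abs_nonneg α) hα 2
      have hβ2 := pow_le_pow_left₀ (abs_nonneg β) hβ 2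
      rw [sq_abs] at hα2 hβ2
      unfold ratioD
      linarith
    have habs : |α| * |(x (k + 1) 0 0 : ℝ)| = ratioD α β / 3 := by
      rw [← abs_mul, hbD, ← abs_of_pos (div_pos hD three_pos)]
      congr 1
      field_simp
    rw [le_div_iff₀ hX1]
    calc |α| * Xnorm x (k + 1) ≤ |α| * ((1 + ξ ^ 2) * |(x (k + 1) 0 0 : ℝ)|) := by
          gcongr; exact h1.2.le
      _ = ratioD α β / 3 * (1 + ξ ^ 2) := by rw [← habs]; ring
      _ ≤ _ := by gcongr; linarith

end MarkoffSeq

/-- A bound on a box that is uniform over the two signs. -/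
lemma exists_bound_on_box_of_sign {f : ℝ → ℝ → ℝ → ℝ → ℝ → ℝ}
    (hf : ∀ s, Continuous fun p : ℝ × ℝ × ℝ × ℝ => f s p.1 p.2.1 p.2.2.1 p.2.2.2) (C : ℝ) :
    ∃ K, 0 < K ∧ ∀ s α β ρ τ : ℝ, (s = 1 ∨ s = -1) →
      |α| ≤ C → |β| ≤ C → |ρ| ≤ C → |τ| ≤ C → |f s α β ρ τ| ≤ K := by
  obtain ⟨K, hK⟩ := exists_bound_on_box (hf 1) C
  obtain ⟨K', hK'⟩ := exists_bound_on_box (hf (-1)) C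
  refine ⟨max 1 (max K K'), lt_max_of_lt_left one_pos, ?_⟩
  rintro s α β ρ τ (rfl | rfl) h1 h2 h3 h4
  · exact (hK α β ρ τ h1 h2 h3 h4).trans ((le_max_left _ _).trans (le_max_right _ _))
  · exact (hK' α β ρ τ h1 h2 h3 h4).trans ((le_max_right _ _).trans (le_max_right _ _))

theorem stmt16 (ξ : ℝ) (x : ℕ → Matrix (Fin 2) (Fin 2) ℤ) (hx : MarkoffSeq ξ x) :
    ∃ c : ℝ, 0 < c ∧ ∀ k, 1 ≤ k →
      (∃ n : ℤ, |(x k 0 0 : ℝ) * (x (k+1) 0 0 : ℝ) * (x (k+2) 1 1 : ℝ) *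
          (x (k+4) 1 1 : ℝ) * ξ^2 - 8 * (-1)^k * (x (k+1) 1 1 : ℝ) * ξ - (n : ℝ)|
          ≤ c / Xnorm x (k+1)) ∧
      (∃ n : ℤ, |(x k 0 0 : ℝ) * (x (k+1) 0 0 : ℝ) * (x (k+2) 0 0 : ℝ) *
          (x (k+4) 0 0 : ℝ) * ξ^6 - 20 * (-1)^k * (x (k+1) 1 1 : ℝ) * ξ - (n : ℝ)|
          ≤ c / Xnorm x (k+1)) := by
  obtain ⟨C, A, hA, hbd⟩ := hx.exists_param_bounds
  obtain ⟨K, hK, hKf⟩ := exists_bound_on_box_of_sign continuous_totalErrFst C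
  obtain ⟨K', hK', hKs⟩ := exists_bound_on_box_of_sign continuous_totalErrSnd C
  refine ⟨A * (K + K'), by positivity, fun k hk => ?_⟩
  obtain ⟨hα, hβ, hρ, hτ, hαX⟩ := hbd k hk
  have hs := neg_one_pow_eq_or ℝ k
  have hX := hx.Xnorm_pos (k := k + 1) (by lia)
  have hy := hx.apply_zero_zero_ne_zero (k := k + 2) (by lia)
  have hα0 := div_ne_zero (hx.apply_zero_zero_ne_zero hk) hy
  have hβ0 := div_ne_zero (hx.apply_zero_zero_ne_zero (k := k + 1) (by lia)) hy
  have hR := hx.ratioForm hk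
  have bound {e : ℝ} (he : |e| ≤ K + K') :
      |(x k 0 0 / x (k + 2) 0 0 : ℝ) * e| ≤ A * (K + K') / Xnorm x (k + 1) := by
    rw [abs_mul, mul_div_right_comm]
    gcongr
  constructor
  · refine ⟨approxFst ((-1) ^ k) (x k 1 1) (x (k + 1) 0 0) (x (k + 1) 0 1) (x (k + 1) 1 1)
      (x (k + 2) 0 1) (x (k + 2) 1 1), ?_⟩
    have hE := hR.fst_eq hs hα0 hβ0 ξ
    simp only [approxFst] at hE ⊢
    push_cast
    rw [hE]
    exact bound ((hKf _ _ _ _ _ hs hα hβ hρ hτ).trans (by linarith))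
  · refine ⟨approxSnd ((-1) ^ k) (x k 1 1) (x (k + 1) 0 0) (x (k + 1) 0 1) (x (k + 1) 1 1)
      (x (k + 2) 0 1) (x (k + 2) 1 1), ?_⟩
    have hE := hR.snd_eq hs hα0 hβ0 ξ
    simp only [approxSnd] at hE ⊢
    push_cast
    rw [hE]
    exact bound ((hKs _ _ _ _ _ hs hα hβ hρ hτ).trans (by linarith))
end

section
/- There exists a constant c > 0 such that the inequality {x_{k,0}·ξ⁶} ≤ c/k holds for infinitely many integers k ≥ 1, i.e. the set {k ≥ 1 : {x_{k,0}·ξ⁶} ≤ c/k} is infinite. -/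
open Polynomial Filter

/-- `f k = O(1 / a k)`. -/
def SmallSeq (a : ℕ → ℤ) (f : ℕ → ℝ) : Prop := f =O[atTop] fun k => (a k : ℝ)⁻¹

/-- `f` is eventually bounded. -/
def BddSeq (f : ℕ → ℝ) : Prop := f =O[atTop] fun _ => (1 : ℝ)

/-- `f k` lies within `O(1 / a k)` of an integer. -/
def NearInt (a : ℕ → ℤ) (f : ℕ → ℝ) : Prop := ∃ n : ℕ → ℤ, SmallSeq a fun k => f k - n k

section Calculus

variable {a : ℕ → ℤ} {f g : ℕ → ℝ}

theorem SmallSeq.congr (hf : SmallSeq a f) (h : ∀ k, g k = f k) : SmallSeq a g := by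
  rwa [show g = f from funext h]

theorem BddSeq.congr (hf : BddSeq f) (h : ∀ k, g k = f k) : BddSeq g := by
  rwa [show g = f from funext h]

theorem SmallSeq.add (hf : SmallSeq a f) (hg : SmallSeq a g) : SmallSeq a fun k => f k + g k :=
  Asymptotics.IsBigO.add hf hg

theorem SmallSeq.sub (hf : SmallSeq a f) (hg : SmallSeq a g) : SmallSeq a fun k => f k - g k :=
  Asymptotics.IsBigO.sub hf hg

theorem SmallSeq.neg (hf : SmallSeq a f) : SmallSeq a fun k => - f k :=
  Asymptotics.IsBigO.neg_left hf

theorem SmallSeq.mul_bdd (hf : SmallSeq a f) (hg : BddSeq g) : SmallSeq a fun k => f k * g k := by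
  simpa [SmallSeq] using Asymptotics.IsBigO.mul hf hg

theorem SmallSeq.bdd_mul (hf : SmallSeq a f) (hg : BddSeq g) : SmallSeq a fun k => g k * f k :=
  (hf.mul_bdd hg).congr fun _ => mul_comm _ _

theorem SmallSeq.const_mul (c : ℝ) (hf : SmallSeq a f) : SmallSeq a fun k => c * f k :=
  Asymptotics.IsBigO.const_mul_left hf c

theorem BddSeq.mul (hf : BddSeq f) (hg : BddSeq g) : BddSeq fun k => f k * g k := by
  simpa [BddSeq] using Asymptotics.IsBigO.mul hf hg

theorem BddSeq.add (hf : BddSeq f) (hg : BddSeq g) : BddSeq fun k => f k + g k :=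
  Asymptotics.IsBigO.add hf hg

theorem BddSeq.sub (hf : BddSeq f) (hg : BddSeq g) : BddSeq fun k => f k - g k :=
  Asymptotics.IsBigO.sub hf hg

theorem bdd_const (c : ℝ) : BddSeq fun _ => c :=
  Asymptotics.isBigO_const_const c one_ne_zero _

theorem bdd_sign : BddSeq fun k => (-1 : ℝ) ^ k :=
  Asymptotics.IsBigO.of_bound 1 (Eventually.of_forall fun k => by simp)

theorem BddSeq.shift (hf : BddSeq f) (j : ℕ) : BddSeq fun k => f (k + j) :=
  Asymptotics.IsBigO.comp_tendsto hf (tendsto_add_atTop_nat j)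

theorem isBigO_of_shift {f g : ℕ → ℝ}
    (h : (fun k => f (k + 1)) =O[atTop] fun k => g (k + 1)) : f =O[atTop] g := by
  rw [← map_add_atTop_eq_nat 1, Asymptotics.isBigO_map]
  exact h

theorem NearInt.congr (hf : NearInt a f) (h : ∀ k, g k = f k) : NearInt a g := by
  rwa [show g = f from funext h]

theorem NearInt.add (hf : NearInt a f) (hg : NearInt a g) : NearInt a fun k => f k + g k := by
  obtain ⟨m, hm⟩ := hf
  obtain ⟨n, hn⟩ := hg
  exact ⟨fun k => m k + n k, (hm.add hn).congr fun k => by push_cast; ring⟩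

theorem NearInt.const_mul (z : ℤ) (hf : NearInt a f) : NearInt a fun k => z * f k := by
  obtain ⟨m, hm⟩ := hf
  exact ⟨fun k => z * m k, (hm.const_mul z).congr fun k => by push_cast; ring⟩

theorem NearInt.sub (hf : NearInt a f) (hg : NearInt a g) : NearInt a fun k => f k - g k :=
  (hf.add (hg.const_mul (-1))).congr fun k => by push_cast; ring

theorem NearInt.sign_mul (hf : NearInt a f) : NearInt a fun k => (-1) ^ k * f k := by
  obtain ⟨m, hm⟩ := hf
  exact ⟨fun k => (-1) ^ k * m k, (hm.bdd_mul bdd_sign).congr fun k => by push_cast; ring⟩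

end Calculus

/-- The integer sequences underlying a Markoff sequence of symmetric matrices
`!![a k, b k; b k, c k]`, together with the properties used in the asymptotic analysis. -/
structure MarkoffTriple (ξ : ℝ) (a b c : ℕ → ℤ) : Prop where
  ne_zero : ∀ k, a k ≠ 0
  det : ∀ k, a k * c k - b k ^ 2 = 1
  recur : ∀ k, a (k + 3) = 3 * a (k + 2) * a (k + 1) - a k
  wedge01 : ∀ k, a (k + 1) * b (k + 2) - b (k + 1) * a (k + 2) = -((-1) ^ k * a k)
  wedge02 : ∀ k, a (k + 1) * c (k + 2) - c (k + 1) * a (k + 2) = -(3 * a k + 2 * (-1) ^ k * b k)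
  wedge12 : ∀ k, b (k + 1) * c (k + 2) - c (k + 1) * b (k + 2) = -(3 * b k + (-1) ^ k * c k)
  volume : ∀ k, a (k + 2) * (b k * c (k + 1) - c k * b (k + 1))
    - b (k + 2) * (a k * c (k + 1) - c k * a (k + 1))
    + c (k + 2) * (a k * b (k + 1) - b k * a (k + 1)) ≠ 0
  small₁ : SmallSeq a fun k => a k * ξ - b k
  small₂ : SmallSeq a fun k => a k * ξ ^ 2 - c k
  ratio : BddSeq fun k => (a k : ℝ) / a (k + 1)
  tendsto : Tendsto (fun k => |(a k : ℝ)|) atTop atTop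

namespace MarkoffTriple

variable {ξ : ℝ} {a b c : ℕ → ℤ}

theorem cast_ne_zero (h : MarkoffTriple ξ a b c) (k : ℕ) : (a k : ℝ) ≠ 0 :=
  Int.cast_ne_zero.2 (h.ne_zero k)

theorem cast_recur (h : MarkoffTriple ξ a b c) (k : ℕ) :
    (a (k + 3) : ℝ) = 3 * a (k + 2) * a (k + 1) - a k := by
  exact_mod_cast h.recur k

theorem small_inv (_h : MarkoffTriple ξ a b c) : SmallSeq a fun k => (a k : ℝ)⁻¹ :=
  Asymptotics.isBigO_refl _ _

theorem small_shift_one (h : MarkoffTriple ξ a b c) {f : ℕ → ℝ} (hf : SmallSeq a f) :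
    SmallSeq a fun k => f (k + 1) := by
  have h1 : (fun k => f (k + 1)) =O[atTop] fun k => ((a (k + 1) : ℤ) : ℝ)⁻¹ :=
    Asymptotics.IsBigO.comp_tendsto hf (tendsto_add_atTop_nat 1)
  refine h1.trans ((h.small_inv.mul_bdd h.ratio).congr fun k => ?_)
  have := h.cast_ne_zero k
  field_simp

theorem small_shift (h : MarkoffTriple ξ a b c) {f : ℕ → ℝ} (hf : SmallSeq a f)
    (j : ℕ) : SmallSeq a fun k => f (k + j) := by
  induction j with
  | zero => exact hf
  | succ j ih => exact (h.small_shift_one ih).congr fun k => by ring_nf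

theorem nearInt_shift (h : MarkoffTriple ξ a b c) {f : ℕ → ℝ} (hf : NearInt a f)
    (j : ℕ) : NearInt a fun k => f (k + j) := by
  obtain ⟨n, hn⟩ := hf
  exact ⟨fun k => n (k + j), h.small_shift hn j⟩

theorem bdd_of_small (h : MarkoffTriple ξ a b c) {f : ℕ → ℝ} (hf : SmallSeq a f) :
    BddSeq f := by
  refine Asymptotics.IsBigO.trans hf (Asymptotics.IsBigO.of_bound 1 ?_)
  filter_upwards [h.tendsto.eventually_ge_atTop 1] with k hk
  simpa using inv_le_one_of_one_le₀ hk

theorem small_ratio (h : MarkoffTriple ξ a b c) :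
    SmallSeq a fun k => (a (k + 1) : ℝ) / a (k + 2) := by
  apply isBigO_of_shift
  obtain ⟨B, hB⟩ := Asymptotics.isBigO_iff.1 (h.ratio.mul (h.ratio.shift 1))
  refine Asymptotics.IsBigO.of_bound 1 ?_
  filter_upwards [hB, (h.tendsto.comp (tendsto_add_atTop_nat 1)).eventually_ge_atTop (B + 1)]
    with k hk hk'
  have h0 := h.cast_ne_zero (k + 1)
  have h1 := h.cast_ne_zero (k + 2)
  have h2 := h.cast_ne_zero (k + 3)
  have e1 : (a (k + 3) : ℝ) / a (k + 2) =
      3 * a (k + 1) - a k / a (k + 1) * (a (k + 1) / a (k + 2)) := by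
    rw [h.cast_recur]; field_simp
  simp only [Function.comp_apply, Real.norm_eq_abs, norm_one, mul_one] at hk hk'
  have e2 : |(a (k + 1) : ℝ)| ≤ |(a (k + 3) : ℝ) / a (k + 2)| := by
    have := abs_sub_abs_le_abs_sub (3 * (a (k + 1) : ℝ))
      (a k / a (k + 1) * (a (k + 1) / a (k + 2)))
    rw [e1]
    rw [abs_mul 3, abs_of_pos (by norm_num : (0 : ℝ) < 3)] at this
    have hk'' : |(a k : ℝ) / a (k + 1) * (a (k + 1) / a (k + 2))| ≤ B := hk
    linarith [abs_nonneg (a (k + 1) : ℝ)]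
  have e3 : |(a (k + 2) : ℝ) / a (k + 3)| ≤ |(a (k + 1) : ℝ)|⁻¹ := by
    rw [← inv_div, abs_inv]
    exact inv_anti₀ (abs_pos.2 h0) e2
  simpa [add_assoc, abs_div] using e3

theorem bdd_mul_div (h : MarkoffTriple ξ a b c) :
    BddSeq fun k => (a k : ℝ) * a (k + 1) / a (k + 2) := by
  have := Asymptotics.IsBigO.mul (Asymptotics.isBigO_refl (fun k => (a k : ℝ)) atTop) h.small_ratio
  refine Asymptotics.IsBigO.congr this (fun k => ?_) fun k => ?_
  · ring
  · exact mul_inv_cancel₀ (h.cast_ne_zero k)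

theorem small_ratio_sub (h : MarkoffTriple ξ a b c) :
    SmallSeq a fun k => (a (k + 2) : ℝ) / a (k + 1) - 3 * a k := by
  apply isBigO_of_shift
  have := Asymptotics.IsBigO.mul h.bdd_mul_div
    (Asymptotics.isBigO_refl (fun k => ((a (k + 1) : ℤ) : ℝ)⁻¹) atTop)
  refine Asymptotics.IsBigO.congr this.neg_left (fun k => ?_) fun k => one_mul _
  have h0 := h.cast_ne_zero (k + 1)
  have h1 := h.cast_ne_zero (k + 2)
  have e := h.cast_recur k
  simp only [add_assoc, Nat.reduceAdd]
  field_simp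
  linear_combination (-1 : ℝ) * e

theorem bdd_div_mul (h : MarkoffTriple ξ a b c) :
    BddSeq fun k => (a (k + 2) : ℝ) / (a (k + 1) * a k) := by
  refine ((h.bdd_of_small (h.small_ratio_sub)).mul (h.bdd_of_small h.small_inv)
    |>.add (bdd_const 3)).congr fun k => ?_
  have h0 := h.cast_ne_zero k
  have h1 := h.cast_ne_zero (k + 1)
  field_simp
  ring

theorem bdd_mul_small (h : MarkoffTriple ξ a b c) {f : ℕ → ℝ} (hf : SmallSeq a f) :
    BddSeq fun k => a k * f k :=
  Asymptotics.IsBigO.congr_right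
    (Asymptotics.IsBigO.mul (Asymptotics.isBigO_refl (fun k => (a k : ℝ)) atTop) hf)
    fun k => mul_inv_cancel₀ (h.cast_ne_zero k)

/-- The deviation of `3 (-1)^k a_k (a_k ξ - b_k)` from `1`. -/
theorem exists_quadratic_error (h : MarkoffTriple ξ a b c) :
    ∃ E : ℕ → ℝ, BddSeq E ∧ ∀ k,
      3 * (-1) ^ k * (a k * (a k * ξ - b k)) =
        1 + (a k * ξ - b k) ^ 2 + E k * (a k / (a (k + 1) * a (k + 2))) ∧
      a k * ξ ^ 2 - c k =
        (2 * ξ - 3 * (-1) ^ k) * (a k * ξ - b k) + E k / (a (k + 1) * a (k + 2)) := by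
  have hp := h.bdd_mul_small h.small₁
  have hq := h.bdd_mul_small h.small₂
  refine ⟨_, bdd_sign.mul (((hp.shift 1).mul (hq.shift 2)).sub ((hq.shift 1).mul (hp.shift 2))),
    fun k => ?_⟩
  have h0 := h.cast_ne_zero k
  have h1 := h.cast_ne_zero (k + 1)
  have h2 := h.cast_ne_zero (k + 2)
  have hd : (a k : ℝ) * c k - b k ^ 2 = 1 := by exact_mod_cast h.det k
  have w1 : (a (k + 1) : ℝ) * b (k + 2) - b (k + 1) * a (k + 2) = -((-1) ^ k * a k) := by
    exact_mod_cast h.wedge01 k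
  have w2 : (a (k + 1) : ℝ) * c (k + 2) - c (k + 1) * a (k + 2)
      = -(3 * a k + 2 * (-1) ^ k * b k) := by exact_mod_cast h.wedge02 k
  have w3 : (b (k + 1) : ℝ) * c (k + 2) - c (k + 1) * b (k + 2)
      = -(3 * b k + (-1) ^ k * c k) := by exact_mod_cast h.wedge12 k
  have hs : ((-1 : ℝ) ^ k) ^ 2 = 1 := by rw [← pow_mul, mul_comm, pow_mul]; norm_num
  generalize (-1 : ℝ) ^ k = s at *
  have key : (a (k + 1) * ξ - b (k + 1)) * (a (k + 2) * ξ ^ 2 - c (k + 2))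
      - (a (k + 1) * ξ ^ 2 - c (k + 1)) * (a (k + 2) * ξ - b (k + 2))
      = -s * (a k * ξ ^ 2 - 2 * b k * ξ + c k) + 3 * (a k * ξ - b k) := by
    linear_combination w3 - ξ * w2 + ξ ^ 2 * w1
  have e : s * (a (k + 1) * (a (k + 1) * ξ - b (k + 1))
        * (a (k + 2) * (a (k + 2) * ξ ^ 2 - c (k + 2)))
      - a (k + 1) * (a (k + 1) * ξ ^ 2 - c (k + 1)) * (a (k + 2) * (a (k + 2) * ξ - b (k + 2))))
      / (a (k + 1) * a (k + 2))
      = s * (-s * (a k * ξ ^ 2 - 2 * b k * ξ + c k) + 3 * (a k * ξ - b k)) := by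
    rw [← key]; field_simp
  rw [mul_div_assoc', mul_comm _ (a k : ℝ), mul_div_assoc, e]
  constructor
  · linear_combination (a k * (a k * ξ ^ 2 - 2 * b k * ξ + c k)) * hs + hd
  · linear_combination (a k * ξ ^ 2 - 2 * b k * ξ + c k) * hs

end MarkoffTriple

/-- First-order expansions of the errors `δ k = a k * ξ - b k` and `η k = a k * ξ ^ 2 - c k`. -/
structure ErrorExpansion (ξ : ℝ) (a : ℕ → ℤ) (δ η E H : ℕ → ℝ) : Prop where
  small_δ : SmallSeq a δ
  small_η : SmallSeq a η
  bdd_E : BddSeq E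
  bdd_H : BddSeq H
  delta : ∀ k, 3 * (-1) ^ k * (a k * δ k) = 1 + H k / a k ^ 2
  dev : ∀ k, H k / a k ^ 2 = δ k ^ 2 + E k * (a k / (a (k + 1) * a (k + 2)))
  eta : ∀ k, η k = (2 * ξ - 3 * (-1) ^ k) * δ k + E k / (a (k + 1) * a (k + 2))

theorem sign_sq (k : ℕ) : ((-1 : ℝ) ^ k) ^ 2 = 1 := by
  rw [← pow_mul, mul_comm, pow_mul]; norm_num

namespace MarkoffTriple

variable {ξ : ℝ} {a b c : ℕ → ℤ} {δ η E H : ℕ → ℝ}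

theorem exists_expansion (h : MarkoffTriple ξ a b c) :
    ∃ E H : ℕ → ℝ,
      ErrorExpansion ξ a (fun k => a k * ξ - b k) (fun k => a k * ξ ^ 2 - c k) E H := by
  obtain ⟨E, hE, hE'⟩ := h.exists_quadratic_error
  have hp := h.bdd_mul_small h.small₁
  refine ⟨E, _, h.small₁, h.small₂, hE,
    (hp.mul hp).add (hE.mul ((h.ratio.mul h.ratio).mul h.bdd_mul_div)), fun k => ?_, fun k => ?_,
    fun k => (hE' k).2⟩
  all_goals
    have h0 := h.cast_ne_zero k
    have h1 := h.cast_ne_zero (k + 1)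
    have h2 := h.cast_ne_zero (k + 2)
  · rw [(hE' k).1]
    field_simp
    ring
  · field_simp

theorem small_ratio_two (h : MarkoffTriple ξ a b c) :
    SmallSeq a fun k => (a k : ℝ) / a (k + 2) :=
  (h.small_ratio.bdd_mul h.ratio).congr fun k => by
    have h1 := h.cast_ne_zero (k + 1)
    field_simp

theorem small_sq_div_sub (h : MarkoffTriple ξ a b c) :
    SmallSeq a fun k => (a (k + 2) : ℝ) ^ 2 / a (k + 3) - a k := by
  have s1 := h.small_ratio_sub
  have s2 : SmallSeq a fun k => (a k : ℝ) ^ 2 / a (k + 3) :=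
    (((h.small_shift h.small_ratio 1).mul_bdd h.bdd_mul_div).mul_bdd h.ratio).congr fun k => by
      have h1 := h.cast_ne_zero (k + 1)
      have h2 := h.cast_ne_zero (k + 2)
      simp only [add_assoc, Nat.reduceAdd]
      field_simp
  have s3 : BddSeq fun k => (a k : ℝ) / a (k + 3) :=
    (h.bdd_of_small ((h.small_ratio_two).mul_bdd (h.ratio.shift 2))).congr fun k => by
      have h2 := h.cast_ne_zero (k + 2)
      simp only [add_assoc, Nat.reduceAdd]
      field_simp
  refine (((s1.const_mul (1 / 3)).add s2).add ((s1.mul_bdd s3).const_mul (1 / 3))).congr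
    fun k => ?_
  have h1 := h.cast_ne_zero (k + 1)
  have h3 := h.cast_ne_zero (k + 3)
  have e := h.cast_recur k
  field_simp
  rw [show (a k : ℝ) = 3 * a (k + 2) * a (k + 1) - a (k + 3) by rw [e]; ring]
  ring

theorem small_step_delta (h : MarkoffTriple ξ a b c) (x : ErrorExpansion ξ a δ η E H) :
    SmallSeq a fun k => a (k + 2) * δ (k + 1) + (-1) ^ k * a k := by
  have s : SmallSeq a fun k => (-1) ^ k * (H (k + 1) * (a (k + 2) / (a (k + 1) * a k)
      * (a k / a (k + 1)))) * (a (k + 1) : ℝ)⁻¹ :=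
    (h.small_shift h.small_inv 1).bdd_mul
      (bdd_sign.mul ((x.bdd_H.shift 1).mul (h.bdd_div_mul.mul h.ratio)))
  refine (((h.small_ratio_sub.bdd_mul bdd_sign).add s).const_mul (-1 / 3)).congr fun k => ?_
  have h0 := h.cast_ne_zero k
  have h1 := h.cast_ne_zero (k + 1)
  have e := x.delta (k + 1)
  have hs := sign_sq k
  rw [pow_succ] at e
  generalize (-1 : ℝ) ^ k = s at *
  field_simp at e ⊢
  linear_combination (-s * a (k + 2)) * e - 3 * a (k + 2) * δ (k + 1) * a (k + 1) ^ 3 * hs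

theorem small_step_eta (h : MarkoffTriple ξ a b c) (x : ErrorExpansion ξ a δ η E H) :
    SmallSeq a fun k => 3 * (a (k + 2) * η (k + 1)) + (6 * (-1) ^ k * ξ + 9) * a k := by
  have s1 := (h.small_step_delta x).bdd_mul
    (((bdd_const (2 * ξ)).add ((bdd_const 3).mul bdd_sign)))
  have s2 := (h.small_shift h.small_inv 3).bdd_mul (x.bdd_E.shift 1)
  refine ((s1.add s2).const_mul 3).congr fun k => ?_
  have h2 := h.cast_ne_zero (k + 2)
  have h3 := h.cast_ne_zero (k + 3)
  have hs := sign_sq k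
  rw [x.eta (k + 1), pow_succ]
  generalize (-1 : ℝ) ^ k = s at *
  simp only [add_assoc, Nat.reduceAdd]
  field_simp
  linear_combination (-9 * a (k + 3) * a k) * hs

theorem small_two_step_delta (h : MarkoffTriple ξ a b c) (x : ErrorExpansion ξ a δ η E H) :
    SmallSeq a fun k => a (k + 4) * δ (k + 2) - (-1) ^ k * a (k + 3) := by
  have s : SmallSeq a fun k => (-1) ^ k * (H (k + 2) * (a (k + 4) / (a (k + 3) * a (k + 2))
      * (a (k + 3) / (a (k + 2) * a (k + 1))))) * ((a (k + 1) : ℝ) / a (k + 2)) :=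
    h.small_ratio.bdd_mul
      (bdd_sign.mul ((x.bdd_H.shift 2).mul ((h.bdd_div_mul.shift 2).mul (h.bdd_div_mul.shift 1))))
  refine ((s.sub (h.small_ratio.bdd_mul bdd_sign)).const_mul (1 / 3)).congr fun k => ?_
  have h1 := h.cast_ne_zero (k + 1)
  have h2 := h.cast_ne_zero (k + 2)
  have h3 := h.cast_ne_zero (k + 3)
  have e := x.delta (k + 2)
  have r := h.cast_recur (k + 1)
  have hs := sign_sq k
  rw [pow_add] at e
  generalize (-1 : ℝ) ^ k = s at *
  simp only [add_assoc, Nat.reduceAdd] at r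
  field_simp at e ⊢
  linear_combination (s * a (k + 4)) * e - 3 * a (k + 4) * δ (k + 2) * a (k + 2) ^ 3 * hs
    + s * a (k + 2) ^ 2 * r

theorem small_two_step_eta (h : MarkoffTriple ξ a b c) (x : ErrorExpansion ξ a δ η E H) :
    SmallSeq a fun k => 3 * (a (k + 4) * η (k + 2)) - (6 * (-1) ^ k * ξ - 9) * a (k + 3) := by
  have s1 := (h.small_two_step_delta x).bdd_mul
    (((bdd_const (2 * ξ)).sub ((bdd_const 3).mul bdd_sign)))
  have s2 := (h.small_shift h.small_inv 3).bdd_mul (x.bdd_E.shift 2)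
  refine ((s1.add s2).const_mul 3).congr fun k => ?_
  have h2 := h.cast_ne_zero (k + 3)
  have h3 := h.cast_ne_zero (k + 4)
  have hs := sign_sq k
  rw [x.eta (k + 2), pow_add]
  generalize (-1 : ℝ) ^ k = s at *
  simp only [add_assoc, Nat.reduceAdd]
  field_simp
  linear_combination (-9 * a (k + 3) ^ 2) * hs

theorem small_mul_delta_two (h : MarkoffTriple ξ a b c) (x : ErrorExpansion ξ a δ η E H) :
    SmallSeq a fun k => 3 * (a (k + 3) * (a (k + 2) * δ (k + 2))) - (-1) ^ k * a (k + 3) := by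
  refine (h.small_ratio.bdd_mul
    (bdd_sign.mul ((x.bdd_H.shift 2).mul (h.bdd_div_mul.shift 1)))).congr fun k => ?_
  have h1 := h.cast_ne_zero (k + 1)
  have h2 := h.cast_ne_zero (k + 2)
  have e := x.delta (k + 2)
  have hs := sign_sq k
  rw [pow_add] at e
  generalize (-1 : ℝ) ^ k = s at *
  simp only [add_assoc, Nat.reduceAdd]
  field_simp at e ⊢
  linear_combination (a (k + 3) * s) * e - 3 * a (k + 3) * δ (k + 2) * a (k + 2) ^ 3 * hs

theorem small_mul_eta_two (h : MarkoffTriple ξ a b c) (x : ErrorExpansion ξ a δ η E H) :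
    SmallSeq a fun k =>
      9 * (a (k + 3) * (a (k + 2) * η (k + 2))) - (6 * (-1) ^ k * ξ - 9) * a (k + 3) := by
  have s1 := (h.small_mul_delta_two x).bdd_mul
    (((bdd_const (2 * ξ)).sub ((bdd_const 3).mul bdd_sign)))
  have s2 := ((h.small_shift h.small_ratio_two 2).bdd_mul (x.bdd_E.shift 2)).const_mul 3
  refine ((s1.add s2).const_mul 3).congr fun k => ?_
  have h2 := h.cast_ne_zero (k + 3)
  have h3 := h.cast_ne_zero (k + 4)
  have hs := sign_sq k
  rw [x.eta (k + 2), pow_add]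
  generalize (-1 : ℝ) ^ k = s at *
  simp only [add_assoc, Nat.reduceAdd]
  field_simp
  linear_combination (-9 * a (k + 3) * a (k + 4)) * hs

theorem small_mul_delta_four (h : MarkoffTriple ξ a b c) (x : ErrorExpansion ξ a δ η E H) :
    SmallSeq a fun k => 3 * (a (k + 3) * (a (k + 4) * δ (k + 4))) - (-1) ^ k * a (k + 3) := by
  refine ((h.small_shift h.small_inv 4).bdd_mul
    (bdd_sign.mul ((x.bdd_H.shift 4).mul (h.ratio.shift 3)))).congr fun k => ?_
  have h4 := h.cast_ne_zero (k + 4)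
  have e := x.delta (k + 4)
  have hs := sign_sq k
  rw [pow_add] at e
  generalize (-1 : ℝ) ^ k = s at *
  simp only [add_assoc, Nat.reduceAdd]
  field_simp at e ⊢
  linear_combination (a (k + 3) * s) * e - 3 * a (k + 3) * δ (k + 4) * a (k + 4) ^ 3 * hs

theorem small_mul_eta_four (h : MarkoffTriple ξ a b c) (x : ErrorExpansion ξ a δ η E H) :
    SmallSeq a fun k =>
      9 * (a (k + 3) * (a (k + 4) * η (k + 4))) - (6 * (-1) ^ k * ξ - 9) * a (k + 3) := by
  have s1 := (h.small_mul_delta_four x).bdd_mul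
    (((bdd_const (2 * ξ)).sub ((bdd_const 3).mul bdd_sign)))
  have s2 := (((h.small_shift h.small_ratio_two 3).mul_bdd
    (h.bdd_of_small (h.small_shift h.small_ratio_two 4))).bdd_mul (x.bdd_E.shift 4)).const_mul 3
  refine ((s1.add s2).const_mul 3).congr fun k => ?_
  have h2 := h.cast_ne_zero (k + 5)
  have h3 := h.cast_ne_zero (k + 6)
  have hs := sign_sq k
  rw [x.eta (k + 4), pow_add]
  generalize (-1 : ℝ) ^ k = s at *
  simp only [add_assoc, Nat.reduceAdd]
  field_simp
  linear_combination (-9 * a (k + 3) * a (k + 5) * a (k + 6)) * hs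

theorem small_sq_eta_below (h : MarkoffTriple ξ a b c) (x : ErrorExpansion ξ a δ η E H) :
    SmallSeq a fun k => 9 * (a (k + 2) ^ 2 * η (k + 3)) + (6 * (-1) ^ k * ξ + 9) * a k := by
  have s1 : SmallSeq a fun k => 3 * (a (k + 2) ^ 2 * δ (k + 3)) + (-1) ^ k * a k := by
    have s := (h.small_shift h.small_inv 3).bdd_mul (bdd_sign.mul ((x.bdd_H.shift 3).mul
      ((h.ratio.shift 2).mul (h.ratio.shift 2))))
    refine ((h.small_sq_div_sub.bdd_mul bdd_sign).add s).neg.congr fun k => ?_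
    have h3 := h.cast_ne_zero (k + 3)
    have e := x.delta (k + 3)
    have hs := sign_sq k
    rw [pow_add] at e
    generalize (-1 : ℝ) ^ k = s at *
    simp only [add_assoc, Nat.reduceAdd]
    field_simp at e ⊢
    linear_combination (-s * a (k + 2) ^ 2) * e
      - 3 * δ (k + 3) * a (k + 2) ^ 2 * a (k + 3) ^ 3 * hs
  have s2 := s1.bdd_mul (((bdd_const (2 * ξ)).add ((bdd_const 3).mul bdd_sign)))
  have s3 := (((h.small_shift h.small_ratio_two 2).mul_bdd
    ((h.bdd_of_small (h.small_shift h.small_ratio_two 2)).mul (h.ratio.shift 4))).bdd_mul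
      (x.bdd_E.shift 3)).const_mul 3
  refine ((s2.add s3).const_mul 3).congr fun k => ?_
  have h4 := h.cast_ne_zero (k + 4)
  have h5 := h.cast_ne_zero (k + 5)
  have hs := sign_sq k
  rw [x.eta (k + 3), pow_add]
  generalize (-1 : ℝ) ^ k = s at *
  simp only [add_assoc, Nat.reduceAdd]
  field_simp
  linear_combination (-9 * a k * a (k + 4) * a (k + 5)) * hs

theorem small_sq_delta_above (h : MarkoffTriple ξ a b c) (x : ErrorExpansion ξ a δ η E H) :
    SmallSeq a fun k =>
      3 * (-1) ^ k * (a (k + 4) ^ 2 * δ (k + 3)) + (3 * (a (k + 4) * a (k + 2)) - a (k + 3)) := by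
  have s1 : SmallSeq a fun k => (a (k + 1) : ℝ) ^ 2 / a (k + 3) :=
    (h.small_ratio.bdd_mul (h.bdd_mul_div.shift 1)).congr fun k => by
      have h2 := h.cast_ne_zero (k + 2)
      simp only [add_assoc, Nat.reduceAdd]
      field_simp
  have r := h.small_shift h.small_ratio_sub 2
  have s2 := (r.mul_bdd (h.ratio.shift 2)).const_mul (2 / 3)
  have s3 := (r.mul_bdd (h.bdd_of_small (r.mul_bdd
    (h.bdd_of_small (h.small_shift h.small_inv 3))))).const_mul (1 / 9)
  have s4 := ((h.small_shift h.small_inv 3).bdd_mul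
    (((h.bdd_div_mul.shift 2).mul (h.bdd_div_mul.shift 2)).mul ((h.ratio.shift 2).mul
    (h.ratio.shift 2)))).mul_bdd (((bdd_const 2).mul (x.bdd_H.shift 3)).add
      (((x.bdd_H.shift 3).mul (x.bdd_H.shift 3)).mul
        ((h.bdd_of_small (h.small_shift h.small_inv 3)).mul
          (h.bdd_of_small (h.small_shift h.small_inv 3))))) |>.const_mul (1 / 9)
  have s5 := (h.small_shift h.small_ratio 3).bdd_mul (x.bdd_E.shift 3)
  refine (((((s1.add s2).add s3).add s4).add s5).add h.small_sq_div_sub).neg.congr fun k => ?_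
  have h1 := h.cast_ne_zero (k + 1)
  have h2 := h.cast_ne_zero (k + 2)
  have h3 := h.cast_ne_zero (k + 3)
  have h4 := h.cast_ne_zero (k + 4)
  have h5 := h.cast_ne_zero (k + 5)
  have e := x.delta (k + 3)
  have e' := x.dev (k + 3)
  have r0 := h.cast_recur k
  have r1 := h.cast_recur (k + 1)
  have hs := sign_sq k
  rw [pow_add] at e
  generalize (-1 : ℝ) ^ k = s at *
  simp only [add_assoc, Nat.reduceAdd] at r0 r1 e' ⊢
  have hd : δ (k + 3) ^ 2 = (1 + H (k + 3) / a (k + 3) ^ 2) ^ 2 / (9 * a (k + 3) ^ 2) := by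
    rw [← e]
    field_simp
    linear_combination (-9 * δ (k + 3) ^ 2) * hs
  have hq : 3 * s * (a (k + 4) ^ 2 * δ (k + 3)) =
      -(a (k + 4) ^ 2 / a (k + 3) * (1 + H (k + 3) / a (k + 3) ^ 2)) := by
    rw [← e]
    field_simp
  have hA : (a (k + 4) : ℝ) ^ 2 / a (k + 3) =
      3 * (a (k + 4) * a (k + 2)) - a (k + 3) - a k + a (k + 1) ^ 2 / a (k + 3) := by
    field_simp
    rw [show (a k : ℝ) = 3 * a (k + 2) * a (k + 1) - a (k + 3) by rw [r0]; ring, r1]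
    ring
  have hB : (a (k + 4) : ℝ) ^ 2 / a (k + 3) * (H (k + 3) / a (k + 3) ^ 2) =
      a (k + 4) ^ 2 / a (k + 3) * ((1 + H (k + 3) / a (k + 3) ^ 2) ^ 2 / (9 * a (k + 3) ^ 2)) +
      E (k + 3) * (a (k + 4) / a (k + 5)) := by
    rw [← hd, e']
    field_simp
  rw [hq, mul_add, mul_one, hB]
  refine Eq.trans (b := -(a (k + 1) ^ 2 / a (k + 3) - a k + (a (k + 4) ^ 2 / a (k + 3)
    * ((1 + H (k + 3) / a (k + 3) ^ 2) ^ 2 / (9 * a (k + 3) ^ 2))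
    + E (k + 3) * (a (k + 4) / a (k + 5))))) ?_ ?_
  · linear_combination (-1 : ℝ) * hA
  · field_simp
    ring

theorem small_sq_eta_above (h : MarkoffTriple ξ a b c) (x : ErrorExpansion ξ a δ η E H) :
    SmallSeq a fun k => 9 * (a (k + 4) ^ 2 * η (k + 3)) +
      (6 * (-1) ^ k * ξ + 9) * (3 * (a (k + 4) * a (k + 2)) - a (k + 3)) := by
  have s1 := (h.small_sq_delta_above x).bdd_mul
    ((bdd_const 9).add (((bdd_const (6 * ξ)).mul bdd_sign)))
  have s2 := ((h.small_shift h.small_ratio 3).bdd_mul (x.bdd_E.shift 3)).const_mul 9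
  refine (s1.add s2).congr fun k => ?_
  have h4 := h.cast_ne_zero (k + 4)
  have h5 := h.cast_ne_zero (k + 5)
  have hs := sign_sq k
  rw [x.eta (k + 3), pow_add]
  generalize (-1 : ℝ) ^ k = s at *
  simp only [add_assoc, Nat.reduceAdd]
  field_simp
  linear_combination (-18 * ξ * a (k + 4) ^ 2 * δ (k + 3) * a (k + 5)) * hs

end MarkoffTriple

/-- The fractional parts of `a k * ξ ^ 6` drift by this amount over a period of length six. -/
noncomputable def drift (ξ : ℝ) (a : ℕ → ℤ) (k : ℕ) : ℝ :=
  90 * (a k * ξ ^ 4) + 324 * ((-1) ^ k * (a k * ξ ^ 3))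
    + 12 * ((-1) ^ k * (a k * ξ ^ 5 + a (k + 3) * ξ ^ 5))

namespace MarkoffTriple

variable {ξ : ℝ} {a b c : ℕ → ℤ}

theorem small_mul_succ (h : MarkoffTriple ξ a b c) {f : ℕ → ℝ} (hf : SmallSeq a f) :
    SmallSeq a fun k => a (k + 1) * f (k + 2) :=
  (h.small_ratio.mul_bdd ((h.bdd_mul_small hf).shift 2)).congr fun k => by
    have h2 := h.cast_ne_zero (k + 2)
    field_simp

theorem small_mul_mul (h : MarkoffTriple ξ a b c) {f g : ℕ → ℝ} (hf : SmallSeq a f)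
    (hg : SmallSeq a g) : SmallSeq a fun k => a (k + 3) * (f (k + 2) * g (k + 2)) :=
  ((h.small_mul_succ hf).mul_bdd (((h.bdd_mul_small hg).shift 2).mul
    (h.bdd_div_mul.shift 1))).congr fun k => by
    have h1 := h.cast_ne_zero (k + 1)
    have h2 := h.cast_ne_zero (k + 2)
    simp only [add_assoc, Nat.reduceAdd]
    field_simp

theorem small_mul_add_two (h : MarkoffTriple ξ a b c) {f : ℕ → ℝ} (hf : SmallSeq a f) :
    SmallSeq a fun k => a (k + 2) * f (k + 4) :=
  ((h.small_shift (h.small_mul_succ hf) 2).mul_bdd (h.ratio.shift 2)).congr fun k => by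
    have h3 := h.cast_ne_zero (k + 3)
    simp only [add_assoc, Nat.reduceAdd]
    field_simp

theorem exists_error (h : MarkoffTriple ξ a b c) :
    ∃ δ η E H : ℕ → ℝ, ErrorExpansion ξ a δ η E H ∧ (∀ k, (b k : ℝ) = a k * ξ - δ k) ∧
      ∀ k, (c k : ℝ) = a k * ξ ^ 2 - η k := by
  obtain ⟨E, H, x⟩ := h.exists_expansion
  exact ⟨_, _, E, H, x, fun k => by ring, fun k => by ring⟩

theorem nearInt_pow_three (h : MarkoffTriple ξ a b c) :
    NearInt a fun k => a (k + 3) * ξ ^ 3 + a k * ξ ^ 3 := by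
  obtain ⟨δ, η, E, H, x, hb, hc⟩ := h.exists_error
  refine ⟨fun k => 3 * c (k + 2) * b (k + 1) - 3 * (-1) ^ k * c k,
    (((((h.small_step_delta x).const_mul (3 * ξ ^ 2)).sub
      (x.small_η.bdd_mul ((bdd_const 3).mul bdd_sign))).add
      ((h.small_mul_succ x.small_η).const_mul (3 * ξ))).sub
      (((h.small_shift x.small_η 2).mul_bdd
        (h.bdd_of_small (h.small_shift x.small_δ 1))).const_mul 3)).congr fun k => ?_⟩
  push_cast
  rw [hb, hc, hc]
  linear_combination ξ ^ 3 * h.cast_recur k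

theorem nearInt_pow_four (h : MarkoffTriple ξ a b c) :
    NearInt a fun k => a (k + 3) * ξ ^ 4 + a k * ξ ^ 4 + 6 * ((-1) ^ k * (a k * ξ ^ 3)) := by
  obtain ⟨δ, η, E, H, x, hb, hc⟩ := h.exists_error
  refine ⟨fun k => 3 * c (k + 2) * c (k + 1) - 9 * c k,
    (((((h.small_step_eta x).const_mul (ξ ^ 2)).sub (x.small_η.const_mul 9)).add
      ((h.small_mul_succ x.small_η).const_mul (3 * ξ ^ 2))).sub
      (((h.small_shift x.small_η 2).mul_bdd
        (h.bdd_of_small (h.small_shift x.small_η 1))).const_mul 3)).congr fun k => ?_⟩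
  push_cast
  rw [hc, hc, hc]
  linear_combination ξ ^ 4 * h.cast_recur k

theorem nearInt_mul_pow_three (h : MarkoffTriple ξ a b c) :
    NearInt a fun k => 3 * (a (k + 4) * a (k + 2)) * ξ ^ 3 := by
  obtain ⟨δ, η, E, H, x, hb, hc⟩ := h.exists_error
  refine ⟨fun k => 3 * c (k + 4) * b (k + 2) + 3 * (-1) ^ k * c (k + 3),
    (((((h.small_two_step_delta x).const_mul (3 * ξ ^ 2)).add
      ((h.small_shift x.small_η 3).bdd_mul ((bdd_const 3).mul bdd_sign))).add
      ((h.small_mul_add_two x.small_η).const_mul (3 * ξ))).sub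
      (((h.small_shift x.small_η 4).mul_bdd
        (h.bdd_of_small (h.small_shift x.small_δ 2))).const_mul 3)).congr fun k => ?_⟩
  push_cast
  rw [hb, hc, hc]
  ring

theorem nearInt_mul_pow_four (h : MarkoffTriple ξ a b c) :
    NearInt a fun k =>
      3 * (a (k + 4) * a (k + 2)) * ξ ^ 4 - 6 * ((-1) ^ k * (a (k + 3) * ξ ^ 3)) := by
  obtain ⟨δ, η, E, H, x, hb, hc⟩ := h.exists_error
  refine ⟨fun k => 3 * c (k + 4) * c (k + 2) - 9 * c (k + 3),
    (((((h.small_two_step_eta x).const_mul (ξ ^ 2)).sub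
      ((h.small_shift x.small_η 3).const_mul 9)).add
      ((h.small_mul_add_two x.small_η).const_mul (3 * ξ ^ 2))).sub
      (((h.small_shift x.small_η 4).mul_bdd
        (h.bdd_of_small (h.small_shift x.small_η 2))).const_mul 3)).congr fun k => ?_⟩
  push_cast
  rw [hc, hc, hc]
  ring

theorem nearInt_mul_pow_five (h : MarkoffTriple ξ a b c) :
    NearInt a fun k => 3 * (a (k + 4) * a (k + 2)) * ξ ^ 5 + a (k + 3) * ξ ^ 5 + a k * ξ ^ 5
      + 6 * ((-1) ^ k * (a k * ξ ^ 4)) + 9 * (a k * ξ ^ 3)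
      - 9 * ((-1) ^ k * (a (k + 3) * ξ ^ 4)) + 9 * (a (k + 3) * ξ ^ 3) := by
  obtain ⟨δ, η, E, H, x, hb, hc⟩ := h.exists_error
  have t := h.small_shift (h.small_mul_succ x.small_η) 1
  have bδ := h.bdd_of_small (h.small_shift x.small_δ 2)
  have bη := h.bdd_of_small (h.small_shift x.small_η 2)
  refine ⟨fun k => 9 * c (k + 3) * b (k + 2) * c (k + 2),
    ((((((((h.small_sq_eta_below x).const_mul (ξ ^ 3)).add
      ((h.small_mul_delta_two x).const_mul (3 * ξ ^ 4))).add
      ((h.small_mul_eta_two x).const_mul (ξ ^ 3))).sub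
      ((h.small_mul_mul x.small_δ x.small_η).const_mul (9 * ξ ^ 2))).sub
      ((t.mul_bdd bδ).const_mul (9 * ξ ^ 2))).sub ((t.mul_bdd bη).const_mul (9 * ξ))).add
      (((h.small_shift x.small_η 3).mul_bdd (bδ.mul bη)).const_mul 9)).congr fun k => ?_⟩
  push_cast
  rw [hb, hc, hc]
  have r := h.cast_recur (k + 1)
  simp only [add_assoc, Nat.reduceAdd] at r ⊢
  linear_combination (3 * a (k + 2) * ξ ^ 5) * r + ξ ^ 5 * h.cast_recur k

theorem nearInt_mul_pow_six (h : MarkoffTriple ξ a b c) :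
    NearInt a fun k => 3 * (a (k + 4) * a (k + 2)) * ξ ^ 6 + a (k + 3) * ξ ^ 6 + a k * ξ ^ 6
      + 6 * ((-1) ^ k * (a k * ξ ^ 5)) + 9 * (a k * ξ ^ 4)
      - 12 * ((-1) ^ k * (a (k + 3) * ξ ^ 5)) + 18 * (a (k + 3) * ξ ^ 4) := by
  obtain ⟨δ, η, E, H, x, hb, hc⟩ := h.exists_error
  have t := h.small_shift (h.small_mul_succ x.small_η) 1
  have bη := h.bdd_of_small (h.small_shift x.small_η 2)
  refine ⟨fun k => 9 * c (k + 3) * c (k + 2) ^ 2,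
    ((((((h.small_sq_eta_below x).const_mul (ξ ^ 4)).add
      ((h.small_mul_eta_two x).const_mul (2 * ξ ^ 4))).sub
      ((h.small_mul_mul x.small_η x.small_η).const_mul (9 * ξ ^ 2))).sub
      ((t.mul_bdd bη).const_mul (18 * ξ ^ 2))).add
      (((h.small_shift x.small_η 3).mul_bdd (bη.mul bη)).const_mul 9)).congr fun k => ?_⟩
  push_cast
  rw [hc, hc]
  have r := h.cast_recur (k + 1)
  simp only [add_assoc, Nat.reduceAdd] at r ⊢
  linear_combination (3 * a (k + 2) * ξ ^ 6) * r + ξ ^ 6 * h.cast_recur k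

theorem cast_recur_six (h : MarkoffTriple ξ a b c) (k : ℕ) : (a (k + 6) : ℝ) =
    9 * (a (k + 4) ^ 2 * a (k + 3)) - 3 * (a (k + 4) * a (k + 2)) - a (k + 3) := by
  have r := h.cast_recur (k + 2)
  have r' := h.cast_recur (k + 3)
  simp only [add_assoc, Nat.reduceAdd] at r r'
  rw [r', r]
  ring

theorem nearInt_add_six_pow_five_aux (h : MarkoffTriple ξ a b c) :
    NearInt a fun k => a (k + 6) * ξ ^ 5 + 3 * (a (k + 4) * a (k + 2)) * ξ ^ 5
      + a (k + 3) * ξ ^ 5 + 6 * ((-1) ^ k * (3 * (a (k + 4) * a (k + 2)) * ξ ^ 4))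
      + 9 * (3 * (a (k + 4) * a (k + 2)) * ξ ^ 3) - 15 * ((-1) ^ k * (a (k + 3) * ξ ^ 4)) := by
  obtain ⟨δ, η, E, H, x, hb, hc⟩ := h.exists_error
  have t := h.small_shift (h.small_mul_succ x.small_η) 2
  have s := h.small_shift x.small_η 3
  have bδ := h.bdd_of_small (h.small_shift x.small_δ 4)
  have bη := h.bdd_of_small (h.small_shift x.small_η 4)
  refine ⟨fun k => 9 * c (k + 4) * b (k + 4) * c (k + 3),
    ((((((((h.small_sq_eta_above x).const_mul (ξ ^ 3)).add
      ((h.small_mul_delta_four x).const_mul (3 * ξ ^ 4))).add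
      ((h.small_mul_eta_four x).const_mul (ξ ^ 3))).sub
      ((t.mul_bdd bδ).const_mul (9 * ξ ^ 2))).sub
      ((s.mul_bdd ((h.bdd_mul_small x.small_δ).shift 4)).const_mul (9 * ξ ^ 2))).sub
      ((s.mul_bdd ((h.bdd_mul_small x.small_η).shift 4)).const_mul (9 * ξ))).add
      ((s.mul_bdd (bδ.mul bη)).const_mul 9)).congr fun k => ?_⟩
  push_cast
  rw [hb, hc, hc]
  simp only [add_assoc, Nat.reduceAdd]
  linear_combination ξ ^ 5 * h.cast_recur_six k

theorem nearInt_add_six_pow_six_aux (h : MarkoffTriple ξ a b c) :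
    NearInt a fun k => a (k + 6) * ξ ^ 6 + 3 * (a (k + 4) * a (k + 2)) * ξ ^ 6
      + a (k + 3) * ξ ^ 6 + 6 * ((-1) ^ k * (3 * (a (k + 4) * a (k + 2)) * ξ ^ 5))
      + 9 * (3 * (a (k + 4) * a (k + 2)) * ξ ^ 4) - 18 * ((-1) ^ k * (a (k + 3) * ξ ^ 5))
      + 9 * (a (k + 3) * ξ ^ 4) := by
  obtain ⟨δ, η, E, H, x, hb, hc⟩ := h.exists_error
  have t := h.small_shift (h.small_mul_succ x.small_η) 2
  have s := h.small_shift x.small_η 3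
  have bη := h.bdd_of_small (h.small_shift x.small_η 4)
  refine ⟨fun k => 9 * c (k + 4) ^ 2 * c (k + 3),
    ((((((h.small_sq_eta_above x).const_mul (ξ ^ 4)).add
      ((h.small_mul_eta_four x).const_mul (2 * ξ ^ 4))).sub
      ((t.mul_bdd bη).const_mul (9 * ξ ^ 2))).sub
      ((s.mul_bdd ((h.bdd_mul_small x.small_η).shift 4)).const_mul (18 * ξ ^ 2))).add
      ((s.mul_bdd (bη.mul bη)).const_mul 9)).congr fun k => ?_⟩
  push_cast
  rw [hc, hc]
  simp only [add_assoc, Nat.reduceAdd]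
  linear_combination ξ ^ 6 * h.cast_recur_six k

theorem nearInt_add_six_pow_five (h : MarkoffTriple ξ a b c) :
    NearInt a fun k => a (k + 6) * ξ ^ 5 - a k * ξ ^ 5 := by
  refine (((((h.nearInt_add_six_pow_five_aux.sub h.nearInt_mul_pow_five).sub
    (h.nearInt_mul_pow_four.sign_mul.const_mul 6)).sub (h.nearInt_mul_pow_three.const_mul 9)).add
    (h.nearInt_pow_four.sign_mul.const_mul 6)).sub (h.nearInt_pow_three.const_mul 27)).congr
    fun k => ?_
  have hs := sign_sq k
  push_cast
  linear_combination (-36 * (a (k + 3) + a k) * ξ ^ 3) * hs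

theorem nearInt_add_six_pow_six (h : MarkoffTriple ξ a b c) :
    NearInt a fun k => a (k + 6) * ξ ^ 6 - a k * ξ ^ 6 - drift ξ a k := by
  refine ((((h.nearInt_add_six_pow_six_aux.sub h.nearInt_mul_pow_six).sub
    (h.nearInt_mul_pow_five.sign_mul.const_mul 6)).sub (h.nearInt_mul_pow_four.const_mul 9)).sub
    (h.nearInt_pow_four.const_mul 45)).congr fun k => ?_
  have hs := sign_sq k
  push_cast [drift]
  linear_combination (36 * a k * ξ ^ 4 - 54 * a (k + 3) * ξ ^ 4) * hs

theorem nearInt_add_six_pow_three (h : MarkoffTriple ξ a b c) :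
    NearInt a fun k => a (k + 6) * ξ ^ 3 - a k * ξ ^ 3 :=
  ((h.nearInt_shift h.nearInt_pow_three 3).sub h.nearInt_pow_three).congr fun k => by
    simp only [add_assoc, Nat.reduceAdd]
    ring

theorem nearInt_drift_add (h : MarkoffTriple ξ a b c) :
    NearInt a fun k => drift ξ a k + drift ξ a (k + 3) - 108 * ((-1) ^ k * (a k * ξ ^ 3)) := by
  refine (((h.nearInt_pow_four.const_mul 90).sub
    (h.nearInt_pow_three.sign_mul.const_mul 324)).sub
    (h.nearInt_add_six_pow_five.sign_mul.const_mul 12)).congr fun k => ?_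
  push_cast [drift, pow_add, add_assoc]
  norm_num
  ring

theorem nearInt_drift_sub (h : MarkoffTriple ξ a b c) :
    NearInt a fun k => drift ξ a (k + 6) - drift ξ a k := by
  refine (((h.nearInt_shift h.nearInt_drift_add 3).sub h.nearInt_drift_add).sub
    (h.nearInt_pow_three.sign_mul.const_mul 108)).congr fun k => ?_
  simp only [add_assoc, Nat.reduceAdd]
  push_cast [pow_add]
  ring

end MarkoffTriple

theorem exists_den_ge_abs_sub_lt {d : ℝ} (hd : Irrational d) (M : ℕ) :
    ∃ q : ℚ, |d - q| < 1 / (q.den : ℝ) ^ 2 ∧ M ≤ q.den := by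
  by_contra! hcon
  refine Real.infinite_rat_abs_sub_lt_one_div_den_sq_of_irrational hd ?_
  have hinj : Function.Injective fun q : ℚ => (q.num, q.den) := fun p q hpq => by
    simp only [Prod.mk.injEq] at hpq
    exact Rat.ext hpq.1 hpq.2
  refine Set.Finite.subset (((Set.finite_Icc (-(⌈(|d| + 1) * M⌉)) ⌈(|d| + 1) * M⌉).prod
    (Set.finite_Iic M)).preimage hinj.injOn) fun q hq => ?_
  have hM := hcon q hq
  have hpos : (1 : ℝ) ≤ q.den := by exact_mod_cast q.pos
  have h1 : |d - q| < 1 := lt_of_lt_of_le hq (by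
    rw [div_le_one (by positivity)]
    exact one_le_pow₀ hpos)
  have h2 : |(q : ℝ)| ≤ |d| + 1 := by
    have := abs_sub_abs_le_abs_sub (q : ℝ) d
    rw [abs_sub_comm] at this
    linarith
  have h3 : |(q.num : ℝ)| ≤ (|d| + 1) * M := by
    have e : (q.num : ℝ) = q * q.den := by exact_mod_cast (Rat.mul_den_eq_num q).symm
    rw [e, abs_mul, Nat.abs_cast]
    exact mul_le_mul h2 (by exact_mod_cast hM.le) (by positivity) (by positivity)
  have h4 : |q.num| ≤ ⌈(|d| + 1) * M⌉ := by
    have := h3.trans (Int.le_ceil _)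
    exact_mod_cast this
  exact ⟨abs_le.1 h4, hM.le⟩

/-- Inhomogeneous approximation: `n * d + w` comes within `5 / n` of an integer infinitely often. -/
theorem frequently_abs_mul_add_sub_le {d : ℝ} (hd : Irrational d) (w : ℝ) :
    ∃ᶠ n : ℕ in atTop, ∃ z : ℤ, |n * d + w - z| ≤ 5 / n := by
  rw [frequently_atTop]
  intro M
  obtain ⟨q, hq, hM⟩ := exists_den_ge_abs_sub_lt hd M
  have hQ : (0 : ℤ) < q.den := by exact_mod_cast q.pos
  have hcop : IsCoprime q.num (q.den : ℤ) := by
    rw [Int.isCoprime_iff_nat_coprime]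
    simpa using q.reduced
  obtain ⟨u, v, huv⟩ := hcop
  set t := round (q.den * w) with ht
  have hlt := Int.emod_lt_of_pos (-t * u) hQ
  have hnn := Int.emod_nonneg (-t * u) hQ.ne'
  have hdiv := Int.mul_ediv_add_emod (-t * u) q.den
  obtain ⟨m, hm⟩ := Int.eq_ofNat_of_zero_le hnn
  rw [hm] at hlt hdiv
  refine ⟨q.den + m, by omega, q.num + t * v - q.num * (-t * u / q.den), ?_⟩
  have hQ' : (0 : ℝ) < q.den := by exact_mod_cast hQ
  have hn : ((q.den + m : ℕ) : ℝ) ≤ 2 * q.den := by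
    have : q.den + m ≤ 2 * q.den := by omega
    exact_mod_cast this
  have hnpos : (0 : ℝ) < ((q.den + m : ℕ) : ℝ) := by
    push_cast; positivity
  have hw : |w - t / q.den| ≤ 1 / 2 / q.den := by
    have := abs_sub_round (q.den * w)
    rw [← ht] at this
    rw [le_div_iff₀ hQ', ← abs_of_pos hQ', ← abs_mul, abs_of_pos hQ']
    convert this using 2
    field_simp
  have hqd : (q : ℝ) = q.num / q.den := by
    exact_mod_cast (Rat.num_div_den q).symm
  have hz : ((q.den + m : ℕ) : ℝ) * q + t / q.den
      = ((q.num + t * v - q.num * (-t * u / q.den) : ℤ) : ℝ) := by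
    have hdiv' : (q.den : ℝ) * ((-t * u / q.den : ℤ) : ℝ) + m = -t * u := by exact_mod_cast hdiv
    have huv' : (u : ℝ) * q.num + v * q.den = 1 := by exact_mod_cast huv
    rw [hqd]
    push_cast
    field_simp
    linear_combination (q.num : ℝ) * hdiv' - t * huv'
  have e : ((q.den + m : ℕ) : ℝ) * d + w
      - ((q.num + t * v - q.num * (-t * u / q.den) : ℤ) : ℝ)
      = ((q.den + m : ℕ) : ℝ) * (d - q) + (w - t / q.den) := by
    rw [← hz]; ring
  rw [e]
  calc _ ≤ ((q.den + m : ℕ) : ℝ) * |d - q| + |w - t / q.den| := by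
        refine (abs_add_le _ _).trans ?_
        rw [abs_mul, abs_of_pos hnpos]
    _ ≤ (2 * q.den) * (1 / (q.den : ℝ) ^ 2) + 1 / 2 / q.den := by gcongr
    _ = 5 / (2 * q.den) := by field_simp; norm_num
    _ ≤ 5 / ((q.den + m : ℕ) : ℝ) := by gcongr

/-- A sequence whose increments are within a geometrically decaying error of integers converges
modulo `1`, at the same rate. -/
theorem exists_limit_mod_one {e g : ℕ → ℝ} {z : ℕ → ℤ}
    (he : ∀ᶠ n in atTop, 0 ≤ e n ∧ e (n + 1) ≤ e n / 2)
    (hg : (fun n => g (n + 1) - g n - z n) =O[atTop] e) :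
    ∃ θ : ℝ, ∃ m : ℕ → ℤ, (fun n => g n - θ - m n) =O[atTop] e := by
  obtain ⟨C, hC, hbd⟩ := hg.exists_pos
  obtain ⟨N, hN⟩ := eventually_atTop.1 (he.and hbd.bound)
  set G : ℕ → ℝ := fun n => g n - ∑ i ∈ Finset.range n, (z i : ℝ) with hG
  have hdec : ∀ n, N ≤ n → ∀ j, e (n + j) ≤ e n / 2 ^ j := fun n hn j => by
    induction j with
    | zero => simp
    | succ j ih =>
      have := (hN (n + j) (by omega)).1.2
      rw [pow_succ, ← div_div]
      rw [add_assoc] at this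
      linarith
  have hstep : ∀ n, N ≤ n → ∀ j,
      dist (G (n + j)) (G (n + j + 1)) ≤ 2 * (C * e n) / 2 / 2 ^ j := fun n hn j => by
    have h1 := (hN (n + j) (by omega)).2
    rw [Real.norm_eq_abs, Real.norm_eq_abs, abs_of_nonneg (hN (n + j) (by omega)).1.1] at h1
    rw [dist_comm, Real.dist_eq]
    have h2 : G (n + j + 1) - G (n + j) = g (n + j + 1) - g (n + j) - z (n + j) := by
      simp only [hG, Finset.sum_range_succ]; ring
    rw [h2]
    calc _ ≤ C * e (n + j) := h1
      _ ≤ C * (e n / 2 ^ j) := by gcongr; exact hdec n hn j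
      _ = _ := by ring
  obtain ⟨θ, hθ⟩ := cauchySeq_tendsto_of_complete
    (cauchySeq_of_le_geometric_two (f := fun j => G (N + j)) fun j => hstep N le_rfl j)
  have hθ' : Tendsto G atTop (nhds θ) := by
    rw [← tendsto_add_atTop_iff_nat N]
    exact hθ.congr fun j => by rw [add_comm]
  refine ⟨θ, fun n => ∑ i ∈ Finset.range n, z i, Asymptotics.IsBigO.of_bound (2 * C) ?_⟩
  filter_upwards [eventually_ge_atTop N] with n hn
  have := dist_le_of_le_geometric_two_of_tendsto₀ (f := fun j => G (n + j))
    (fun j => hstep n hn j)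
    (hθ'.comp ((tendsto_add_atTop_nat n).congr fun j => add_comm j n))
  rw [Real.dist_eq] at this
  rw [Real.norm_eq_abs, Real.norm_eq_abs, abs_of_nonneg (hN n hn).1.1]
  convert this using 1
  · simp only [hG]
    push_cast
    congr 1
    simp only [add_zero]
    ring
  · ring

theorem isBigO_inv_of_halving {e : ℕ → ℝ} (he : ∀ᶠ n in atTop, 0 ≤ e n ∧ e (n + 1) ≤ e n / 2) :
    e =O[atTop] fun n => ((n : ℝ))⁻¹ := by
  obtain ⟨N, hN⟩ := eventually_atTop.1 he
  have key : ∀ n, N + 1 ≤ n → n * e n ≤ ((N + 1 : ℕ) : ℝ) * e (N + 1) := fun n hn => by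
    induction n, hn using Nat.le_induction with
    | base => rfl
    | succ n hn ih =>
      refine le_trans ?_ ih
      have h1 := hN n (by omega)
      have h2 : (1 : ℝ) ≤ n := by exact_mod_cast (by omega : 1 ≤ n)
      push_cast
      nlinarith [h1.1, h1.2]
  refine Asymptotics.IsBigO.of_bound (((N + 1 : ℕ) : ℝ) * e (N + 1)) ?_
  filter_upwards [eventually_ge_atTop (N + 1)] with n hn
  have h2 : (0 : ℝ) < n := by exact_mod_cast (by omega : 0 < n)
  rw [Real.norm_eq_abs, Real.norm_eq_abs, abs_of_nonneg (hN n (by omega)).1,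
    abs_of_pos (inv_pos.2 h2), ← div_eq_mul_inv, le_div_iff₀ h2, mul_comm]
  exact key n hn

theorem tendsto_class (r : ℕ) : Tendsto (fun n : ℕ => r + 6 * n) atTop atTop :=
  tendsto_atTop_mono (fun n => by simp only [id]; omega) tendsto_id

theorem int_eq_zero_of_abs_lt_one {z : ℤ} {r : ℝ} (hz : (z : ℝ) = r) (hr : |r| < 1) : z = 0 := by
  rw [← hz] at hr
  exact Int.abs_lt_one_iff.1 (by exact_mod_cast hr)

namespace MarkoffTriple

variable {ξ : ℝ} {a b c : ℕ → ℤ}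

theorem tendsto_zero_of_small (h : MarkoffTriple ξ a b c) {f : ℕ → ℝ} (hf : SmallSeq a f) :
    Tendsto f atTop (nhds 0) := by
  refine Asymptotics.IsBigO.trans_tendsto hf ?_
  rw [tendsto_zero_iff_abs_tendsto_zero]
  exact (tendsto_inv_atTop_zero.comp h.tendsto).congr fun k => by simp

theorem small_wedge (h : MarkoffTriple ξ a b c) {δ η τ : ℕ → ℝ} (hδ : SmallSeq a δ)
    (hη : SmallSeq a η) (hτ : SmallSeq a τ) (N : ℝ) (l : ℕ)
    (hl : ∀ f g : ℕ → ℝ, SmallSeq a f → SmallSeq a g →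
      SmallSeq a fun k => a (k + l) * (f (k + 2) * g (k + 2))) :
    SmallSeq a fun k =>
      a (k + 2) * (N * (ξ * δ (k + 2) - η (k + 2)) * -η (k + l)
        + δ (k + l) * (N * ξ ^ 2 * δ (k + 2) - τ (k + 2)))
      + δ (k + 2) * (-(N * (a (k + 2) * ξ - δ (k + 2)) * η (k + l))
        - (N * ξ ^ 2 * δ (k + 2) - τ (k + 2)) * a (k + l))
      + η (k + 2) * (N * (a (k + 2) * ξ - δ (k + 2)) * δ (k + l)
        + N * (ξ * δ (k + 2) - η (k + 2)) * a (k + l)) := by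
  have pδ := (h.bdd_mul_small hδ).shift 2
  have pη := (h.bdd_mul_small hη).shift 2
  have pτ := (h.bdd_mul_small hτ).shift 2
  have bδ := h.bdd_of_small (h.small_shift hδ 2)
  have bη := h.bdd_of_small (h.small_shift hη 2)
  have dl := h.small_shift hδ l
  have el := h.small_shift hη l
  refine ((((((((((dl.bdd_mul pδ).const_mul (N * ξ ^ 2)).sub
    ((el.bdd_mul pδ).const_mul (2 * N * ξ))).add
    (((el.bdd_mul pη).const_mul N).add ((dl.bdd_mul pη).const_mul (N * ξ)))).sub
    (dl.bdd_mul pτ)).add ((el.bdd_mul (bδ.mul bδ)).const_mul N)).sub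
    ((dl.bdd_mul (bδ.mul bη)).const_mul N)).sub ((hl δ δ hδ hδ).const_mul (N * ξ ^ 2))).add
    (hl δ τ hδ hτ)).add (((hl δ η hδ hη).const_mul (N * ξ)).sub
      ((hl η η hη hη).const_mul N))).congr fun k => ?_
  ring

/-- The numbers `N * a k * ξ ^ 3` do not come within `O(1 / a k)` of integers infinitely often. -/
theorem eventually_ne_of_small (h : MarkoffTriple ξ a b c) {τ : ℕ → ℝ} (hτ : SmallSeq a τ)
    {N : ℤ} (hN : N ≠ 0) :
    ∀ᶠ k in atTop, ∀ w : ℤ, N * (a (k + 2) * ξ ^ 3) - w ≠ τ (k + 2) := by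
  obtain ⟨δ, η, E, H, x, hb, hc⟩ := h.exists_error
  have s₁ := h.small_wedge x.small_δ x.small_η hτ N 1 fun f g hf hg =>
    ((h.small_mul_succ hf).mul_bdd (h.bdd_of_small (h.small_shift hg 2))).congr fun k => by ring
  have s₃ := h.small_wedge x.small_δ x.small_η hτ N 3 fun f g hf hg => h.small_mul_mul hf hg
  have t₁ := (h.tendsto_zero_of_small s₁).abs.eventually_lt_const
    (u := 1) (by simp)
  have t₃ := (h.tendsto_zero_of_small s₃).abs.eventually_lt_const
    (u := 1) (by simp)
  filter_upwards [t₁, t₃] with k h₁ h₃ w hw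
  have key : ∀ l : ℕ,
      ((a (k + 2) * (N * c (k + 2) * c (k + l) - w * b (k + l))
        - b (k + 2) * (N * b (k + 2) * c (k + l) - w * a (k + l))
        + c (k + 2) * (N * b (k + 2) * b (k + l) - N * c (k + 2) * a (k + l)) : ℤ) : ℝ) =
      a (k + 2) * (N * (ξ * δ (k + 2) - η (k + 2)) * -η (k + l)
        + δ (k + l) * (N * ξ ^ 2 * δ (k + 2) - τ (k + 2)))
      + δ (k + 2) * (-(N * (a (k + 2) * ξ - δ (k + 2)) * η (k + l))
        - (N * ξ ^ 2 * δ (k + 2) - τ (k + 2)) * a (k + l))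
      + η (k + 2) * (N * (a (k + 2) * ξ - δ (k + 2)) * δ (k + l)
        + N * (ξ * δ (k + 2) - η (k + 2)) * a (k + l)) := fun l => by
    push_cast
    rw [← hw, hb, hb, hc, hc]
    ring
  have z₁ := int_eq_zero_of_abs_lt_one (key 1) h₁
  have z₃ := int_eq_zero_of_abs_lt_one (key 3) h₃
  have hd := h.det (k + 2)
  have hv := h.volume (k + 1)
  simp only [add_assoc, Nat.reduceAdd] at hv
  refine (mul_ne_zero hN hv) ?_
  linear_combination (a (k + 2) * b (k + 3) - b (k + 2) * a (k + 3)) * z₁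
    + (a (k + 1) * b (k + 2) - b (k + 1) * a (k + 2)) * z₃
    - (N * (a (k + 3) * (b (k + 1) * c (k + 2) - c (k + 1) * b (k + 2))
      - b (k + 3) * (a (k + 1) * c (k + 2) - c (k + 1) * a (k + 2))
      + c (k + 3) * (a (k + 1) * b (k + 2) - b (k + 1) * a (k + 2)))) * hd

theorem eventually_halving (h : MarkoffTriple ξ a b c) (r : ℕ) :
    ∀ᶠ n in atTop, 0 ≤ |(a (r + 6 * n) : ℝ)|⁻¹ ∧
      |(a (r + 6 * (n + 1)) : ℝ)|⁻¹ ≤ |(a (r + 6 * n) : ℝ)|⁻¹ / 2 := by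
  have s : SmallSeq a fun k => (a k : ℝ) / a (k + 6) :=
    ((h.small_ratio_two.mul_bdd (h.bdd_of_small (h.small_shift h.small_ratio_two 2))).mul_bdd
      (h.bdd_of_small (h.small_shift h.small_ratio_two 4))).congr fun k => by
      have h2 := h.cast_ne_zero (k + 2)
      have h4 := h.cast_ne_zero (k + 4)
      simp only [add_assoc, Nat.reduceAdd]
      field_simp
  have t := (h.tendsto_zero_of_small s).abs.eventually_lt_const (u := 1 / 2) (by simp)
  filter_upwards [(tendsto_class r).eventually t] with n hn
  refine ⟨by positivity, ?_⟩
  have h0 : 0 < |(a (r + 6 * n) : ℝ)| := abs_pos.2 (h.cast_ne_zero _)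
  have h6 : 0 < |(a (r + 6 * n + 6) : ℝ)| := abs_pos.2 (h.cast_ne_zero _)
  rw [abs_div, div_lt_iff₀ h6] at hn
  rw [show r + 6 * (n + 1) = r + 6 * n + 6 by ring]
  field_simp
  linarith

theorem isBigO_class {f : ℕ → ℝ} (hf : SmallSeq a f) (r : ℕ) :
    (fun n => f (r + 6 * n)) =O[atTop] fun n => |(a (r + 6 * n) : ℝ)|⁻¹ := by
  have := Asymptotics.IsBigO.comp_tendsto hf (tendsto_class r)
  refine this.trans (Asymptotics.IsBigO.of_bound 1 (Eventually.of_forall fun n => ?_))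
  simp

theorem exists_limit_class (h : MarkoffTriple ξ a b c) {f : ℕ → ℝ}
    (hf : NearInt a fun k => f (k + 6) - f k) (r : ℕ) :
    ∃ θ : ℝ, ∃ m : ℕ → ℤ,
      (fun n => f (r + 6 * n) - θ - m n) =O[atTop] fun n => |(a (r + 6 * n) : ℝ)|⁻¹ := by
  obtain ⟨z, hz⟩ := hf
  exact exists_limit_mod_one (z := fun n => z (r + 6 * n)) (h.eventually_halving r)
    (isBigO_class hz r)

theorem irrational_limit (h : MarkoffTriple ξ a b c) {θ : ℝ} {m : ℕ → ℤ}
    (hθ : (fun n => a (2 + 6 * n) * ξ ^ 3 - θ - m n) =O[atTop]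
      fun n => |(a (2 + 6 * n) : ℝ)|⁻¹) : Irrational θ := by
  rintro ⟨q, rfl⟩
  set τ : ℕ → ℝ := fun k => if k % 6 = 2 then q.den * (a k * ξ ^ 3 - q - m (k / 6)) else 0 with hτ
  have hsmall : SmallSeq a τ := by
    obtain ⟨C, hC, hbd⟩ := hθ.exists_pos
    obtain ⟨n₀, hn₀⟩ := eventually_atTop.1 hbd.bound
    refine Asymptotics.IsBigO.of_bound (q.den * C) ?_
    filter_upwards [eventually_ge_atTop (6 * n₀ + 2)] with k hk
    by_cases hk2 : k % 6 = 2
    · have := hn₀ (k / 6) (by omega)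
      rw [show 2 + 6 * (k / 6) = k by omega, norm_inv, Real.norm_eq_abs |_|, abs_abs] at this
      simp only [hτ, hk2, if_true, norm_mul, Real.norm_natCast, norm_inv, mul_assoc]
      exact mul_le_mul_of_nonneg_left this (by positivity)
    · simp only [hτ, hk2, if_false, norm_zero]
      positivity
  have hm : Tendsto (fun n : ℕ => 6 * n) atTop atTop := by simpa using tendsto_class 0
  have hN : (q.den : ℤ) ≠ 0 := by exact_mod_cast q.den_ne_zero
  obtain ⟨n, hn⟩ := (hm.eventually (h.eventually_ne_of_small hsmall hN)).exists
  refine hn (q.num + q.den * m n) ?_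
  have e : (q.num : ℝ) = q * q.den := by exact_mod_cast (Rat.mul_den_eq_num q).symm
  simp only [hτ]
  rw [if_pos (by omega), show (6 * n + 2) / 6 = n by omega]
  push_cast
  rw [e]
  ring

theorem exists_irrational_drift (h : MarkoffTriple ξ a b c) :
    ∃ r : ℕ, ∃ d : ℝ, Irrational d ∧ ∃ m : ℕ → ℤ,
      (fun n => drift ξ a (r + 6 * n) - d - m n) =O[atTop]
        fun n => |(a (r + 6 * n) : ℝ)|⁻¹ := by
  obtain ⟨θ, m, hθ⟩ := h.exists_limit_class (f := fun k => a k * ξ ^ 3)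
    h.nearInt_add_six_pow_three 2
  obtain ⟨d, i, hd⟩ := h.exists_limit_class h.nearInt_drift_sub 2
  obtain ⟨d', i', hd'⟩ := h.exists_limit_class h.nearInt_drift_sub 5
  by_cases h2 : Irrational d
  · exact ⟨2, d, h2, i, hd⟩
  by_cases h5 : Irrational d'
  · exact ⟨5, d', h5, i', hd'⟩
  exfalso
  have hirr := h.irrational_limit hθ
  obtain ⟨z, hz⟩ := h.nearInt_drift_add
  have hzero : ∀ r, Tendsto (fun n => |(a (r + 6 * n) : ℝ)|⁻¹) atTop (nhds 0) := fun r =>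
    tendsto_inv_atTop_zero.comp (h.tendsto.comp (tendsto_class r))
  have L := ((((isBigO_class hz 2).trans_tendsto (hzero 2)).sub
    (hd.trans_tendsto (hzero 2))).sub (hd'.trans_tendsto (hzero 5))).add
    ((hθ.trans_tendsto (hzero 2)).const_mul 108)
  simp only [sub_zero, mul_zero, add_zero] at L
  obtain ⟨p, hp⟩ : d + d' - 108 * θ ∈ Set.range ((↑) : ℤ → ℝ) := by
    have L' := (L.neg.add_const (d + d' - 108 * θ)).congr (f₂ := fun n =>
        ((z (2 + 6 * n) - i n - i' n + 108 * m n : ℤ) : ℝ)) fun n => by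
      rw [show 5 + 6 * n = 2 + 6 * n + 3 by ring,
        show (-1 : ℝ) ^ (2 + 6 * n) = 1 by rw [pow_add, pow_mul]; norm_num]
      push_cast
      ring
    rw [neg_zero, zero_add] at L'
    exact Int.isClosedEmbedding_coe_real.isClosed_range.mem_of_tendsto L'
      (Eventually.of_forall fun n => ⟨_, rfl⟩)
  obtain ⟨q, hq⟩ := not_not.1 h2
  obtain ⟨q', hq'⟩ := not_not.1 h5
  refine hirr ⟨(q + q' - p) / 108, ?_⟩
  push_cast
  rw [hq, hq', hp]
  ring

theorem exists_linear_class (h : MarkoffTriple ξ a b c) :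
    ∃ r : ℕ, ∃ d w : ℝ, Irrational d ∧ ∃ m : ℕ → ℤ,
      (fun n : ℕ => a (r + 6 * n) * ξ ^ 6 - n * d - w - m n) =O[atTop] fun n : ℕ => (n : ℝ)⁻¹ := by
  obtain ⟨r, d, hd, i, hi⟩ := h.exists_irrational_drift
  obtain ⟨z, hz⟩ := h.nearInt_add_six_pow_six
  obtain ⟨w, m, hw⟩ := exists_limit_mod_one (g := fun n : ℕ => a (r + 6 * n) * ξ ^ 6 - n * d)
    (z := fun n => z (r + 6 * n) + i n) (h.eventually_halving r)
    (((isBigO_class hz r).add hi).congr_left fun n => by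
      rw [show r + 6 * (n + 1) = r + 6 * n + 6 by ring]
      push_cast
      ring)
  exact ⟨r, d, w, hd, m, hw.trans (isBigO_inv_of_halving (h.eventually_halving r))⟩

/-- Infinitely many of the numbers `a k * ξ ^ 6` lie within `O(1 / k)` of an integer. -/
theorem frequently_abs_sub_le (h : MarkoffTriple ξ a b c) :
    ∃ C : ℝ, 0 < C ∧ ∃ᶠ k : ℕ in atTop, ∃ z : ℤ, |a k * ξ ^ 6 - z| ≤ C / (k + 1) := by
  obtain ⟨r, d, w, hd, m, hO⟩ := h.exists_linear_class
  obtain ⟨C, hC, hbd⟩ := hO.exists_pos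
  refine ⟨(C + 5) * (r + 7), by positivity, (tendsto_class r).frequently ?_⟩
  refine ((frequently_abs_mul_add_sub_le hd w).and_eventually
    (hbd.bound.and (eventually_ge_atTop 1))).mono ?_
  rintro n ⟨⟨z, hz⟩, hn, hn1⟩
  refine ⟨z + m n, ?_⟩
  have hn0 : (1 : ℝ) ≤ n := by exact_mod_cast hn1
  rw [Real.norm_eq_abs, norm_inv, Real.norm_natCast] at hn
  calc _ = |(a (r + 6 * n) * ξ ^ 6 - n * d - w - m n) + (n * d + w - z)| := by
        push_cast; congr 1; ring
    _ ≤ C * (n : ℝ)⁻¹ + 5 / n := (abs_add_le _ _).trans (add_le_add hn hz)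
    _ = (C + 5) * (r + 7) / ((r + 7) * n) := by field_simp
    _ ≤ _ := by
        gcongr
        push_cast
        nlinarith [(Nat.cast_nonneg r : (0 : ℝ) ≤ r)]

end MarkoffTriple

section MarkoffSeq

variable {ξ : ℝ} {x : ℕ → Matrix (Fin 2) (Fin 2) ℤ}

theorem MarkoffSeq.det_eq_s18 (hx : MarkoffSeq ξ x) {k : ℕ} (hk : 1 ≤ k) :
    x k 0 0 * x k 1 1 - x k 0 1 ^ 2 = 1 := by
  have h := hx.2.1 k hk
  rw [Matrix.det_fin_two, ← hx.1 k hk] at h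
  linear_combination h

theorem MarkoffSeq.step (hx : MarkoffSeq ξ x) {k : ℕ} (hk : 1 ≤ k) :
    x (k + 2) = x (k + 1) * Mmat (k + 1) * x k ∧ x (k + 2) = x k * Mmat k * x (k + 1) := by
  obtain ⟨c₁, c₂, c₃, -, -, -, h⟩ := hx.2.2
  exact (h k hk).2.2.1

theorem MarkoffSeq.entries (hx : MarkoffSeq ξ x) {k : ℕ} (hk : 1 ≤ k) :
    x (k + 2) 0 0 = x (k + 1) 0 0 * (3 * x k 0 0 - (-1) ^ k * x k 0 1)
      + x (k + 1) 0 1 * ((-1) ^ k * x k 0 0) ∧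
    x (k + 2) 0 1 = x (k + 1) 0 0 * (3 * x k 0 1 - (-1) ^ k * x k 1 1)
      + x (k + 1) 0 1 * ((-1) ^ k * x k 0 1) ∧
    x (k + 2) 0 1 = x (k + 1) 0 1 * (3 * x k 0 0 - (-1) ^ k * x k 0 1)
      + x (k + 1) 1 1 * ((-1) ^ k * x k 0 0) ∧
    x (k + 2) 1 1 = x (k + 1) 0 1 * (3 * x k 0 1 - (-1) ^ k * x k 1 1)
      + x (k + 1) 1 1 * ((-1) ^ k * x k 0 1) := by
  have h := fun i j => congrFun (congrFun (hx.step hk).1 i) j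
  have h00 := h 0 0
  have h01 := h 0 1
  have h10 := h 1 0
  have h11 := h 1 1
  simp only [Matrix.mul_apply, Fin.sum_univ_two, Mmat, Matrix.of_apply, Matrix.cons_val_zero,
    Matrix.cons_val_one, Matrix.cons_val', Matrix.cons_val_fin_one, pow_succ, ← hx.1 k hk,
    ← hx.1 (k + 1) (by omega), ← hx.1 (k + 2) (by omega)] at h00 h01 h10 h11
  refine ⟨?_, ?_, ?_, ?_⟩
  · rw [h00]; ring
  · rw [h01]; ring
  · rw [h10]; ring
  · rw [h11]; ring

theorem MarkoffSeq.wedge (hx : MarkoffSeq ξ x) {k : ℕ} (hk : 1 ≤ k) :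
    x (k + 1) 0 0 * x (k + 2) 0 1 - x (k + 1) 0 1 * x (k + 2) 0 0 = (-1) ^ k * x k 0 0 ∧
    x (k + 1) 0 0 * x (k + 2) 1 1 - x (k + 1) 1 1 * x (k + 2) 0 0
      = -(3 * x k 0 0 - 2 * (-1) ^ k * x k 0 1) ∧
    x (k + 1) 0 1 * x (k + 2) 1 1 - x (k + 1) 1 1 * x (k + 2) 0 1
      = -(3 * x k 0 1 - (-1) ^ k * x k 1 1) := by
  obtain ⟨e00, e01, e10, e11⟩ := hx.entries hk
  have hd := hx.det_eq_s18 (k := k + 1) (by omega)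
  generalize (-1 : ℤ) ^ k = s at *
  refine ⟨?_, ?_, ?_⟩
  · linear_combination x (k + 1) 0 0 * e10 - x (k + 1) 0 1 * e00 + s * x k 0 0 * hd
  · linear_combination x (k + 1) 0 0 * e11 - x (k + 1) 1 1 * e00 + x (k + 1) 0 1 * (e10 - e01)
      + (2 * s * x k 0 1 - 3 * x k 0 0) * hd
  · linear_combination x (k + 1) 0 1 * e11 - x (k + 1) 1 1 * e01
      + (s * x k 1 1 - 3 * x k 0 1) * hd

theorem Mmat_det (k : ℕ) : (Mmat k).det = 1 := by
  have : (((-1) ^ k : ℤ)) ^ 2 = 1 := by rw [← pow_mul, mul_comm, pow_mul]; norm_num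
  rw [Mmat, Matrix.det_fin_two_of, pow_succ]
  linear_combination this

/-- The matrices satisfy a linear recurrence with scalar coefficients. -/
theorem MarkoffSeq.linear_recurrence (hx : MarkoffSeq ξ x) {k : ℕ} (hk : 1 ≤ k) :
    x (k + 3) = (3 * x (k + 1) 0 0) • x (k + 2) - x k := by
  set A := x (k + 1) * Mmat (k + 1) with hA
  have h1 : x (k + 2) = A * x k := (hx.step hk).1
  have h2 : x (k + 3) = A * x (k + 2) := (hx.step (k := k + 1) (by omega)).2
  have htr : A 0 0 + A 1 1 = 3 * x (k + 1) 0 0 := by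
    simp only [hA, Matrix.mul_apply, Fin.sum_univ_two, Mmat, Matrix.of_apply, Matrix.cons_val_zero,
      Matrix.cons_val_one, Matrix.cons_val', Matrix.cons_val_fin_one, pow_succ,
      ← hx.1 (k + 1) (by omega)]
    ring
  have hdet : A 0 0 * A 1 1 - A 0 1 * A 1 0 = 1 := by
    rw [← Matrix.det_fin_two, hA, Matrix.det_mul, Mmat_det, hx.2.1 _ (by omega), one_mul]
  have hsq : A * A = (A 0 0 + A 1 1) • A - 1 := by
    ext i j
    simp only [Matrix.mul_apply, Fin.sum_univ_two, Matrix.sub_apply, Matrix.smul_apply, smul_eq_mul,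
      Matrix.one_apply]
    fin_cases i <;> fin_cases j <;> norm_num <;>
      first | ring1 | linear_combination -hdet
  rw [h2, h1, ← mul_assoc, hsq, htr, sub_mul, one_mul, smul_mul_assoc]

theorem MarkoffSeq.volume_ne_zero (hx : MarkoffSeq ξ x) {k : ℕ} (hk : 1 ≤ k) :
    x (k + 3) 0 0 * (x (k + 1) 0 1 * x (k + 2) 1 1 - x (k + 1) 1 1 * x (k + 2) 0 1)
    - x (k + 3) 0 1 * (x (k + 1) 0 0 * x (k + 2) 1 1 - x (k + 1) 1 1 * x (k + 2) 0 0)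
    + x (k + 3) 1 1 * (x (k + 1) 0 0 * x (k + 2) 0 1 - x (k + 1) 0 1 * x (k + 2) 0 0) ≠ 0 := by
  obtain ⟨w1, w2, w3⟩ := hx.wedge hk
  have hd := hx.det_eq_s18 hk
  have hr := hx.linear_recurrence hk
  refine ne_of_eq_of_ne (b := -2 * (-1) ^ k) ?_ (by simp)
  rw [hr]
  simp only [Matrix.sub_apply, Matrix.smul_apply, smul_eq_mul]
  linear_combination - x k 0 0 * w3 + x k 0 1 * w2 - x k 1 1 * w1 - 2 * (-1) ^ k * hd

theorem MarkoffSeq.xnorm_nonneg (k : ℕ) : 0 ≤ Xnorm x k :=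
  (abs_nonneg _).trans (le_max_left _ _)

theorem MarkoffSeq.tendsto_xnorm (hx : MarkoffSeq ξ x) : Tendsto (Xnorm x) atTop atTop := by
  obtain ⟨c₁, c₂, c₃, -, -, -, h⟩ := hx.2.2
  have hint : ∀ k, ∃ z : ℤ, Xnorm x k = z := fun k =>
    ⟨max |x k 0 0| (max |x k 0 1| |x k 1 1|), by simp [Xnorm]⟩
  choose z hz using hint
  have hstep : ∀ k, Xnorm x (k + 1) + 1 ≤ Xnorm x (k + 2) := fun k => by
    have := (h (k + 1) (by omega)).2.2.2.1
    rw [hz, hz] at this ⊢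
    exact_mod_cast this
  have hlin : ∀ k : ℕ, (k : ℝ) ≤ Xnorm x (k + 1) := fun k => by
    induction k with
    | zero => simpa using MarkoffSeq.xnorm_nonneg 1
    | succ k ih => push_cast; linarith [hstep k]
  rw [← tendsto_add_atTop_iff_nat 1]
  exact tendsto_atTop_mono hlin tendsto_natCast_atTop_atTop

theorem MarkoffSeq.triple (hx : MarkoffSeq ξ x) :
    MarkoffTriple ξ (fun k => x (k + 3) 0 0) (fun k => x (k + 3) 0 1)
      (fun k => x (k + 3) 1 1) := by
  have htX := hx.tendsto_xnorm
  obtain ⟨c₁, c₂, c₃, -, -, h₃, h⟩ := hx.2.2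
  have hX : ∀ k, Xnorm x (k + 3) < (1 + ξ ^ 2) * |(x (k + 3) 0 0 : ℝ)| :=
    fun k => (h (k + 3) (by omega)).2.2.2.2
  have hne : ∀ k, x (k + 3) 0 0 ≠ 0 := fun k hk => by
    have := hX k
    rw [hk] at this
    simp only [Int.cast_zero, abs_zero, mul_zero] at this
    exact this.not_ge (MarkoffSeq.xnorm_nonneg _)
  have hpos : ∀ k, 0 < |(x (k + 3) 0 0 : ℝ)| := fun k => by
    simpa using hne k
  have hle : ∀ k, c₃ / Xnorm x (k + 3) ≤ c₃ * |(x (k + 3) 0 0 : ℝ)|⁻¹ := fun k => by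
    rw [div_eq_mul_inv]
    gcongr
    · exact hpos k
    · exact le_max_left _ _
  have hw := fun k => hx.wedge (k := k + 3) (by omega)
  refine ⟨hne, fun k => hx.det_eq_s18 (by omega), fun k => ?_, fun k => ?_, fun k => ?_, fun k => ?_,
    fun k => hx.volume_ne_zero (k := k + 2) (by omega), ?_, ?_, ?_, ?_⟩
  · have e := (hx.entries (k := k + 4) (by omega)).1
    have w := (hw k).1
    have hs : (((-1) ^ k : ℤ)) ^ 2 = 1 := by rw [← pow_mul, mul_comm, pow_mul]; norm_num
    simp only [add_assoc, Nat.reduceAdd, pow_add] at e w ⊢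
    linear_combination e + (-1) ^ k * (-1) ^ 4 * w - x (k + 3) 0 0 * hs
  · linear_combination (hw k).1
  · linear_combination (hw k).2.1
  · linear_combination (hw k).2.2
  · refine Asymptotics.IsBigO.of_bound c₃ (Eventually.of_forall fun k => ?_)
    rw [norm_inv, Real.norm_eq_abs, Real.norm_eq_abs]
    exact (h (k + 3) (by omega)).2.1.1.trans (hle k)
  · refine Asymptotics.IsBigO.of_bound ((|ξ| + 1) * c₃) (Eventually.of_forall fun k => ?_)
    rw [norm_inv, Real.norm_eq_abs, Real.norm_eq_abs]
    obtain ⟨b₁, b₂⟩ := (h (k + 3) (by omega)).2.1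
    have e : (x (k + 3) 0 0 : ℝ) * ξ ^ 2 - x (k + 3) 1 1 =
        ξ * (x (k + 3) 0 0 * ξ - x (k + 3) 0 1) + (x (k + 3) 0 1 * ξ - x (k + 3) 1 1) := by ring
    rw [e]
    refine (abs_add_le _ _).trans ?_
    rw [abs_mul]
    have := mul_le_mul_of_nonneg_left (b₁.trans (hle k)) (abs_nonneg ξ)
    linarith [b₂.trans (hle k)]
  · refine Asymptotics.IsBigO.of_bound (1 + ξ ^ 2) (Eventually.of_forall fun k => ?_)
    rw [norm_one, mul_one, norm_div, Real.norm_eq_abs, Real.norm_eq_abs,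
      div_le_iff₀ (hpos (k + 1))]
    have h1 : |(x (k + 3) 0 0 : ℝ)| ≤ Xnorm x (k + 3) := le_max_left _ _
    have h2 := (h (k + 3) (by omega)).2.2.2.1
    have h3 := hX (k + 1)
    rw [show k + 1 + 3 = k + 3 + 1 by ring] at h3 ⊢
    linarith
  · have hc : (0 : ℝ) < 1 + ξ ^ 2 := by positivity
    rw [← tendsto_const_mul_atTop_of_pos hc]
    exact tendsto_atTop_mono (fun k => (hX k).le) (htX.comp (tendsto_add_atTop_nat 3))

end MarkoffSeq

theorem stmt18 (ξ : ℝ) (x : ℕ → Matrix (Fin 2) (Fin 2) ℤ) (hx : MarkoffSeq ξ x) :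
    ∃ c : ℝ, 0 < c ∧
      {k : ℕ | 1 ≤ k ∧ distInt ((x k 0 0 : ℝ) * ξ^6) ≤ c / (k : ℝ)}.Infinite := by
  obtain ⟨C, hC, hfreq⟩ := hx.triple.frequently_abs_sub_le
  refine ⟨3 * C, by positivity, Nat.frequently_atTop_iff_infinite.1 ?_⟩
  refine (tendsto_add_atTop_nat 3).frequently (hfreq.mono ?_)
  rintro k ⟨z, hz⟩
  refine ⟨by omega, (round_le _ z).trans (hz.trans ?_)⟩
  rw [div_le_div_iff₀ (by positivity) (by positivity)]
  push_cast
  nlinarith [(Nat.cast_nonneg k : (0 : ℝ) ≤ k)]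
end
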